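/- Let a, b, c be coprime positive integers with min{a,b,c} > 1 and c odd. Then N(a,b,c) ≤ 2, i.e., the set of triples (x,y,z) of positive integers satisfying a^x + b^y = c^z has at most 2 elements. -/

import Mathlib

/-!
A solution of `a ^ x + b ^ y = c ^ z`, with `a` even and `b`, `c` odd, gives an element
`α = √(b ^ y) + √(-a ^ x)` of norm `c ^ z`. The proof shows that among three solutions two give
elements whose quotients behave well, and that one of two such elements is, up to sign, a power of
the other.

**Choosing the pair** (`uniform_exists`). Let `χ (x, y)` be the class of `a ^ x * b ^ (-y)` in
`(ℤ / c)ˣ`; a solution has `χ = -1`. Any three vectors of `ℤ × ℤ` satisfy an integral relation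
whose coefficients are not all even. Applying `χ` to such relations between the exponent vectors of
the solutions and their half-differences yields two solutions with `x₁ ≡ x₂`, `y₁ ≡ y₂` modulo `2`
such that `χ` is `1` or `-1` on half of the difference. Write `x_j = x₀ + 2 e_j`,
`y_j = y₀ + 2 f_j` and `α_j = u_j √B + v_j √(-A)` with `A = a ^ x₀`, `B = b ^ y₀`,
`u_j = b ^ f_j`, `v_j = a ^ e_j`. After changing the sign of one `v_j` if necessary, the condition
on `χ` says that `c` is coprime to `u₁ v₂ + u₂ v₁`: at every prime above `c` the ideals `(α₁)` and
`(α₂)` are supported on the same side, although `c` may have several prime factors.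

**The pair** (`pair_ordered`). Such elements admit a Euclidean algorithm on the exponents `z_j`
(`descent_step`): if `z₁ < z₂`, then `α₂` is replaced by the element `α₃` of norm
`c ^ |z₂ - 2 z₁|` with `α₂ + c ^ m α₃ = 2 s α₁`, or by its conjugate. Following the power of `2`
through it gives `e₁ = e₂` (`val_eq`). If `f₁ ≤ f₂`, the coordinates of `α₁` now divide those of
`α₂`, none of the elements that occur can be shorter than `α₁`, and the algorithm only ever divides
by `α₁ ^ 2`; hence `α₂ = ± α₁ ^ n` with `n` odd (`eq_pow`). So the real part of `α₁ ^ n` is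
`± b ^ d` times that of `α₁`, where `d = f₂ - f₁`. Comparing the `p`-adic valuation with the
binomial expansion shows that `b ^ d` is too small compared with `|α₁| ^ (n - 1)`, except when `3`
exactly divides `b ^ y₁`, which leaves only `10 + 3 = 13`, `10 + 3 ^ 7 = 13 ^ 3` (`power_case`).

**Conclusion.** Three solutions thus force `(a, b, c) = (10, 3, 13)`. There, congruences modulo `13`
and `7` make `x` and `y` odd, and the pair argument with `(1, 1, 1)` leaves only the two solutions
above (`sol_eq`).
-/

/-! ### Elements of norm a power of `c` -/

/-- No prime divisor of `c` divides `x`. -/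
def Avoids (c x : ℤ) : Prop := ∀ p : ℤ, Prime p → p ∣ c → ¬ p ∣ x

lemma Avoids.isCoprime {c x : ℤ} (hc : c ≠ 0) (h : Avoids c x) : IsCoprime c x :=
  isCoprime_of_prime_dvd (fun h0 => hc h0.1) fun p hp h1 h2 => h p hp h1 h2

lemma Avoids.mul {c x y : ℤ} (hx : Avoids c x) (hy : Avoids c y) : Avoids c (x * y) :=
  fun p hp hpc hd => (hp.dvd_or_dvd hd).elim (hx p hp hpc) (hy p hp hpc)

/-- The coordinates `u`, `v` of an element `α = u √B + v √(-A)` of norm `c ^ z`, both of them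
coprime to `c`. -/
structure NormRep (A B c u v : ℤ) (z : ℕ) : Prop where
  norm : B * u ^ 2 + A * v ^ 2 = c ^ z
  hu : Avoids c u
  hv : Avoids c v

/-- For `αⱼ = uⱼ √B + vⱼ √(-A)` of norm `c ^ zⱼ` with `u₁ v₂ + u₂ v₁` coprime to `c`, the quotient
`α₂ / α₁ = s + w √(-A B)` is integral as soon as `z₁ ≤ z₂`. -/
lemma quotient_exists {A B c u1 v1 u2 v2 : ℤ} {z1 z2 : ℕ} (hc : c ≠ 0)
    (hB : Avoids c B)
    (h1 : NormRep A B c u1 v1 z1) (h2 : NormRep A B c u2 v2 z2)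
    (hco : Avoids c (u1 * v2 + u2 * v1)) (hz : z1 ≤ z2) :
    ∃ s w : ℤ, u2 = s * u1 - A * w * v1 ∧ v2 = s * v1 + B * w * u1 ∧
      s ^ 2 + A * B * w ^ 2 = c ^ (z2 - z1) ∧ c ^ z1 * w = u1 * v2 - u2 * v1 := by
  obtain ⟨k, rfl⟩ := Nat.exists_eq_add_of_le hz
  have n1 := h1.norm
  have n2 := h2.norm
  rw [pow_add] at n2
  have hcz : (c ^ z1) ≠ 0 := pow_ne_zero _ hc
  have hw : c ^ z1 ∣ u1 * v2 - u2 * v1 := by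
    have cop : IsCoprime (c ^ z1) (B * (u1 * v2 + u2 * v1)) :=
      ((hB.mul hco).isCoprime hc).pow_left
    refine cop.dvd_of_dvd_mul_left ⟨v2 ^ 2 - c ^ k * v1 ^ 2, ?_⟩
    linear_combination v2 ^ 2 * n1 - v1 ^ 2 * n2
  obtain ⟨w, hw⟩ := hw
  have hs : c ^ z1 ∣ B * u1 * u2 + A * v1 * v2 := by
    have cop : IsCoprime (c ^ z1) v1 := (h1.hv.isCoprime hc).pow_left
    refine cop.dvd_of_dvd_mul_left ⟨v2 - B * u1 * w, ?_⟩
    linear_combination v2 * n1 - B * u1 * hw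
  obtain ⟨s, hs⟩ := hs
  have e1 : u2 = s * u1 - A * w * v1 := by
    apply mul_left_cancel₀ hcz
    linear_combination -u2 * n1 + u1 * hs - A * v1 * hw
  have e2 : v2 = s * v1 + B * w * u1 := by
    apply mul_left_cancel₀ hcz
    linear_combination -v2 * n1 + v1 * hs + B * u1 * hw
  refine ⟨s, w, e1, e2, ?_, hw.symm⟩
  rw [Nat.add_sub_cancel_left]
  apply mul_left_cancel₀ hcz
  rw [← n2, ← n1, e1, e2]
  ring

/-- One step of the Euclidean algorithm on `z₁ < z₂`. With `β = α₂ / α₁` and `m` the minimum of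
`z₁` and `z₂ - z₁`, the product of `α₁` and the conjugate of `β` is divisible by `c ^ m`; its
quotient by `c ^ m`, conjugated if `2 z₁ ≤ z₂`, is `α₃`. Its norm is `c ^ z₃` with
`z₃ = |z₂ - 2 z₁| < z₂`, and it can again be paired with `α₁` unless `z₃ = 0`. If `z₃ ≥ z₁`, then moreover `α₂ = α₁ ^ 2 α₃`. -/
lemma descent_step {A B c u1 v1 u2 v2 : ℤ} {z1 z2 : ℕ} (hc : c ≠ 0)
    (hA : Avoids c A) (hB : Avoids c B) (h2c : Avoids c 2)
    (h1 : NormRep A B c u1 v1 z1) (h2 : NormRep A B c u2 v2 z2)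
    (hco : Avoids c (u1 * v2 + u2 * v1)) (hz1 : 1 ≤ z1) (hz : z1 < z2) :
    ∃ (u3 v3 s : ℤ) (m z3 : ℕ),
      B * u3 ^ 2 + A * v3 ^ 2 = c ^ z3 ∧ z3 < z2 ∧
      u2 + c ^ m * u3 = 2 * s * u1 ∧ (v2 + c ^ m * v3 = 2 * s * v1 ∨
        v2 - c ^ m * v3 = 2 * s * v1) ∧
      (1 ≤ z3 → NormRep A B c u3 v3 z3 ∧ Avoids c (u1 * v3 + u3 * v1)) ∧
      (z3 < z1 ∨ (z2 = z3 + 2 * z1 ∧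
        u2 = u1 * (B * u1 * u3 - A * v1 * v3) - A * v1 * (u1 * v3 + v1 * u3) ∧
        v2 = v1 * (B * u1 * u3 - A * v1 * v3) + B * u1 * (u1 * v3 + v1 * u3))) := by
  obtain ⟨s, w, e1, e2, hn, hw⟩ := quotient_exists hc hB h1 h2 hco hz.le
  have n1 := h1.norm
  have hm : ∀ m, m ≤ z1 → m ≤ z2 - z1 → ∃ u3 v3 : ℤ, c ^ m * u3 = s * u1 + A * w * v1 ∧
      c ^ m * v3 = s * v1 - B * w * u1 := by
    intro m hm1 hm2
    obtain ⟨i, hi⟩ := pow_dvd_pow c hm1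
    obtain ⟨j, hj⟩ := pow_dvd_pow c hm2
    have d1 : c ^ m ∣ s * u1 + A * w * v1 := by
      have cop : IsCoprime (c ^ m) (B * u2) := ((hB.mul h2.hu).isCoprime hc).pow_left
      refine cop.dvd_of_dvd_mul_left ⟨s ^ 2 * i - A * v1 ^ 2 * j, ?_⟩
      rw [e1]
      linear_combination s ^ 2 * n1 - A * v1 ^ 2 * hn + s ^ 2 * hi - A * v1 ^ 2 * hj
    have d2 : c ^ m ∣ s * v1 - B * w * u1 := by
      have cop : IsCoprime (c ^ m) (A * v2) := ((hA.mul h2.hv).isCoprime hc).pow_left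
      refine cop.dvd_of_dvd_mul_left ⟨s ^ 2 * i - B * u1 ^ 2 * j, ?_⟩
      rw [e2]
      linear_combination s ^ 2 * n1 - B * u1 ^ 2 * hn + s ^ 2 * hi - B * u1 ^ 2 * hj
    obtain ⟨u3, h3⟩ := d1
    obtain ⟨v3, h4⟩ := d2
    exact ⟨u3, v3, h3.symm, h4.symm⟩
  have hw0 : ∀ p : ℤ, Prime p → p ∣ c → ¬ p ∣ w := by
    intro p hp hpc hpw
    have hps : p ∣ s := by
      have : p ∣ s ^ 2 := by
        have h5 : s ^ 2 = c ^ (z2 - z1) - A * B * w * w := by rw [← hn]; ring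
        rw [h5]
        exact dvd_sub (dvd_pow hpc (by omega)) (hpw.mul_left _)
      exact hp.dvd_of_dvd_pow this
    apply h2.hu p hp hpc
    rw [e1]
    exact dvd_sub (hps.mul_right _) ((hpw.mul_left _).mul_right _)
  -- `m = z₁` or `m = z₂ - z₁`; the relations are solved for `β`, respectively for `α₁`
  rcases le_or_gt (2 * z1) z2 with hcase | hcase
  · obtain ⟨u3, v3, hu3, hv3⟩ := hm z1 le_rfl (by omega)
    have hcz : (c ^ z1) ≠ 0 := pow_ne_zero _ hc
    have es : s = B * u1 * u3 + A * v1 * v3 := by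
      apply mul_left_cancel₀ hcz
      linear_combination - s * n1 - B * u1 * hu3 - A * v1 * hv3
    have ew : w = u3 * v1 - u1 * v3 := by
      apply mul_left_cancel₀ hcz
      linear_combination - w * n1 - v1 * hu3 + u1 * hv3
    have n3 : B * u3 ^ 2 + A * v3 ^ 2 = c ^ (z2 - 2 * z1) := by
      apply mul_left_cancel₀ (pow_ne_zero 2 hcz)
      have : (c ^ z1) ^ 2 * c ^ (z2 - 2 * z1) = c ^ z1 * c ^ (z2 - z1) := by
        rw [← pow_mul, ← pow_add, ← pow_add]; congr 1; omega
      have t : (c ^ z1) ^ 2 * (B * u3 ^ 2 + A * v3 ^ 2)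
        = B * (c ^ z1 * u3) ^ 2 + A * (c ^ z1 * v3) ^ 2 := by ring
      rw [this, t, hu3, hv3, ← n1, ← hn]; ring
    refine ⟨u3, -v3, s, z1, z2 - 2 * z1, by rw [neg_sq, n3], by omega, ?_, Or.inr ?_, ?_,
      Or.inr ⟨by omega, ?_, ?_⟩⟩
    · rw [hu3, e1]; ring
    · rw [mul_neg, hv3, e2]; ring
    · intro h3
      have key : ∀ p : ℤ, Prime p → p ∣ c → p ∣ u3 → p ∣ v3 → False := by
        intro p hp hpc a1 a2
        exact hw0 p hp hpc (by rw [ew]; exact dvd_sub (a1.mul_right _) (a2.mul_left _))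
      refine ⟨⟨by rw [neg_sq, n3], ?_, ?_⟩, ?_⟩
      · intro p hp hpc hd
        refine key p hp hpc hd ?_
        have : p ∣ A * v3 ^ 2 := by
          rw [show A * v3 ^ 2 = c ^ (z2 - 2 * z1) - B * u3 * u3 by rw [← n3]; ring]
          exact dvd_sub (dvd_pow hpc (by omega)) (hd.mul_left _)
        exact hp.dvd_of_dvd_pow ((hp.dvd_or_dvd this).resolve_left (hA p hp hpc))
      · intro p hp hpc hd
        rw [dvd_neg] at hd
        refine key p hp hpc ?_ hd
        have : p ∣ B * u3 ^ 2 := by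
          rw [show B * u3 ^ 2 = c ^ (z2 - 2 * z1) - A * v3 * v3 by rw [← n3]; ring]
          exact dvd_sub (dvd_pow hpc (by omega)) (hd.mul_left _)
        exact hp.dvd_of_dvd_pow ((hp.dvd_or_dvd this).resolve_left (hB p hp hpc))
      · intro p hp hpc hd
        exact hw0 p hp hpc (by rw [ew]; convert hd using 1; ring)
    · rw [e1, es, ew]; ring
    · rw [e2, es, ew]; ring
  · obtain ⟨u3, v3, hu3, hv3⟩ := hm (z2 - z1) (by omega) le_rfl
    have hcz : (c ^ (z2 - z1)) ≠ 0 := pow_ne_zero _ hc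
    have eu : u1 = s * u3 - A * w * v3 := by
      apply mul_left_cancel₀ hcz
      linear_combination - u1 * hn - s * hu3 + A * w * hv3
    have ev : v1 = s * v3 + B * w * u3 := by
      apply mul_left_cancel₀ hcz
      linear_combination - v1 * hn - s * hv3 - B * w * hu3
    have n3 : B * u3 ^ 2 + A * v3 ^ 2 = c ^ (2 * z1 - z2) := by
      apply mul_left_cancel₀ (pow_ne_zero 2 hcz)
      have : (c ^ (z2 - z1)) ^ 2 * c ^ (2 * z1 - z2) = c ^ z1 * c ^ (z2 - z1) := by
        rw [← pow_mul, ← pow_add, ← pow_add]; congr 1; omega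
      rw [this, ← n1, ← hn]
      have t : (c ^ (z2 - z1)) ^ 2 * (B * u3 ^ 2 + A * v3 ^ 2)
        = B * (c ^ (z2 - z1) * u3) ^ 2 + A * (c ^ (z2 - z1) * v3) ^ 2 := by ring
      rw [hn, t, hu3, hv3, ← hn]; ring
    refine ⟨u3, v3, s, z2 - z1, 2 * z1 - z2, n3, by omega, ?_, Or.inl ?_, ?_,
      Or.inl (by omega)⟩
    · rw [hu3, e1]; ring
    · rw [hv3, e2]; ring
    · intro h3
      have key : ∀ p : ℤ, Prime p → p ∣ c → p ∣ u3 → p ∣ v3 → False := by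
        intro p hp hpc a1 a2
        exact h1.hu p hp hpc (by rw [eu]; exact dvd_sub (a1.mul_left _) (a2.mul_left _))
      refine ⟨⟨n3, ?_, ?_⟩, ?_⟩
      · intro p hp hpc hd
        refine key p hp hpc hd ?_
        have : p ∣ A * v3 ^ 2 := by
          rw [show A * v3 ^ 2 = c ^ (2 * z1 - z2) - B * u3 * u3 by rw [← n3]; ring]
          exact dvd_sub (dvd_pow hpc (by omega)) (hd.mul_left _)
        exact hp.dvd_of_dvd_pow ((hp.dvd_or_dvd this).resolve_left (hA p hp hpc))
      · intro p hp hpc hd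
        refine key p hp hpc ?_ hd
        have : p ∣ B * u3 ^ 2 := by
          rw [show B * u3 ^ 2 = c ^ (2 * z1 - z2) - A * v3 * v3 by rw [← n3]; ring]
          exact dvd_sub (dvd_pow hpc (by omega)) (hd.mul_left _)
        exact hp.dvd_of_dvd_pow ((hp.dvd_or_dvd this).resolve_left (hB p hp hpc))
      · intro p hp hpc hd
        -- as `α₁² = (α₁ α₃) β`, a prime factor of `c` that divides the `√(-A B)`-coordinate of
        -- `α₁ α₃` would also divide that of `α₁²`, which is `2 u₁ v₁`
        have hs' : p ∣ B * u1 * u3 - A * v1 * v3 := by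
          have : p ∣ (B * u1 * u3 - A * v1 * v3) ^ 2 := by
            rw [show (B * u1 * u3 - A * v1 * v3) ^ 2 = c ^ z1 * (B * u3 ^ 2 + A * v3 ^ 2)
              - A * B * (u1 * v3 + u3 * v1) * (u1 * v3 + u3 * v1) by rw [← n1]; ring]
            exact dvd_sub ((dvd_pow hpc (by omega)).mul_right _) (hd.mul_left _)
          exact hp.dvd_of_dvd_pow this
        have : p ∣ 2 * u1 * v1 := by
          rw [show 2 * u1 * v1 = s * (u1 * v3 + u3 * v1)
            + w * (B * u1 * u3 - A * v1 * v3) by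
              linear_combination v1 * eu + u1 * ev]
          exact dvd_add (hd.mul_left _) (hs'.mul_left _)
        exact ((h2c.mul h1.hu).mul h1.hv) p hp hpc this

/-- The imaginary coordinates have the same `2`-adic valuation. The hypotheses make every `A v²`
even and every `B u²` divisible by `q`; they persist along the Euclidean algorithm, so no element of
norm `1` occurs and the algorithm stops at `α₂ = ± α₁`. -/
lemma val_eq {A B c q : ℤ} (hc : c ≠ 0) (hA : Avoids c A) (hB : Avoids c B)
    (h2c : Avoids c 2) (hA0 : 0 < A) (hB0 : 0 < B) (hq : Prime q) (hqc : ¬ q ∣ c) :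
    ∀ (N z1 z2 : ℕ) (u1 v1 u2 v2 : ℤ), z1 + z2 ≤ N → 1 ≤ z1 → 1 ≤ z2 →
    NormRep A B c u1 v1 z1 → NormRep A B c u2 v2 z2 → Avoids c (u1 * v2 + u2 * v1) →
    (2 ∣ A ∨ 2 ∣ v1 ∧ 2 ∣ v2) → (q ∣ B ∨ q ∣ u1 ∧ q ∣ u2) →
    ∀ k : ℕ, 2 ^ k ∣ v1 ↔ 2 ^ k ∣ v2 := by
  have h2 : ¬ (2 : ℤ) ∣ c := fun h => h2c 2 Int.prime_two h dvd_rfl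
  intro N
  induction N with
  | zero => intros; omega
  | succ N ih =>
    have main : ∀ (z1 z2 : ℕ) (u1 v1 u2 v2 : ℤ), z1 + z2 ≤ N + 1 → 1 ≤ z1 → z1 ≤ z2 →
        NormRep A B c u1 v1 z1 → NormRep A B c u2 v2 z2 → Avoids c (u1 * v2 + u2 * v1) →
        (2 ∣ A ∨ 2 ∣ v1 ∧ 2 ∣ v2) → (q ∣ B ∨ q ∣ u1 ∧ q ∣ u2) →
        ∀ k : ℕ, 2 ^ k ∣ v1 ↔ 2 ^ k ∣ v2 := by
      intro z1 z2 u1 v1 u2 v2 hN hz1 hz h1 h2' hco hev hqd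
      rcases hz.eq_or_lt with rfl | hlt
      · obtain ⟨s, w, e1, e2, hn, hw⟩ := quotient_exists hc hB h1 h2' hco le_rfl
        rw [Nat.sub_self, pow_zero] at hn
        -- `s ^ 2 + A B w ^ 2 = 1` with an even second term forces `w = 0` and `s = ± 1`
        have hABw : 2 ∣ A * B * w ^ 2 := by
          rcases hev with h | ⟨ha, hb⟩
          · exact (h.mul_right _).mul_right _
          · have : (2 : ℤ) ∣ c ^ z1 * w := by
              rw [hw]; exact dvd_sub (hb.mul_left _) (ha.mul_left _)
            have := (Int.prime_two.dvd_or_dvd this).resolve_left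
              fun h => h2 (Int.prime_two.dvd_of_dvd_pow h)
            exact (dvd_pow this two_ne_zero).mul_left _
        have hAB : 0 < A * B := mul_pos hA0 hB0
        have hw0 : w = 0 := by
          by_contra hw0
          have h5 : 0 < A * B * w ^ 2 := by positivity
          nlinarith [sq_nonneg s, Int.le_of_dvd h5 hABw]
        subst hw0
        have hs : s = 1 ∨ s = -1 := by
          have h6 : (s - 1) * (s + 1) = 0 := by linear_combination hn
          rcases mul_eq_zero.1 h6 with h | h
          · left; linarith
          · right; linarith
        intro k
        rcases hs with rfl | rfl <;> simp [e2]
      · obtain ⟨u3, v3, s, m, z3, n3, hz3, l1, l2, hrep, -⟩ :=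
          descent_step hc hA hB h2c h1 h2' hco hz1 hlt
        have hcm : ∀ p : ℤ, Prime p → ¬ p ∣ c → ∀ x k, p ^ k ∣ c ^ m * x → p ^ k ∣ x := by
          intro p hp hpc x k hd
          refine IsCoprime.dvd_of_dvd_mul_left (IsCoprime.pow ?_) hd
          exact (Prime.coprime_iff_not_dvd hp).mpr hpc
        have hv3 : ∀ k, 2 ^ k ∣ v2 → 2 ^ k ∣ 2 * s * v1 → 2 ^ k ∣ v3 := by
          intro k hk2 hk1
          apply hcm 2 Int.prime_two h2
          rcases l2 with l2 | l2
          · rw [show c ^ m * v3 = 2 * s * v1 - v2 by linarith]; exact dvd_sub hk1 hk2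
          · rw [show c ^ m * v3 = v2 - 2 * s * v1 by linarith]; exact dvd_sub hk2 hk1
        have hev3 : 2 ∣ A ∨ 2 ∣ v1 ∧ 2 ∣ v3 := by
          refine hev.imp_right fun h => ⟨h.1, ?_⟩
          simpa using hv3 1 (by simpa using h.2) (by simpa using h.1.mul_left (2 * s))
        have hq3 : q ∣ B ∨ q ∣ u1 ∧ q ∣ u3 := by
          refine hqd.imp_right fun h => ⟨h.1, ?_⟩
          have := hcm q hq hqc u3 1 (by
            rw [show c ^ m * u3 = 2 * s * u1 - u2 by linarith, pow_one]
            exact dvd_sub (h.1.mul_left _) h.2)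
          simpa using this
        have hz3' : 1 ≤ z3 := by
          by_contra h0
          obtain rfl : z3 = 0 := by omega
          rw [pow_zero] at n3
          have a1 : 2 ∣ A * v3 ^ 2 := by
            rcases hev3 with h | h
            · exact h.mul_right _
            · exact (dvd_pow h.2 two_ne_zero).mul_left _
          have a2 : q ∣ B * u3 ^ 2 := by
            rcases hq3 with h | h
            · exact h.mul_right _
            · exact (dvd_pow h.2 two_ne_zero).mul_left _
          have p1 : 0 ≤ A * v3 ^ 2 := by positivity
          have p2 : 0 ≤ B * u3 ^ 2 := by positivity
          have : A * v3 ^ 2 = 0 := by omega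
          rw [show B * u3 ^ 2 = 1 by omega] at a2
          exact hq.not_dvd_one a2
        obtain ⟨h3, hco3⟩ := hrep hz3'
        have IH := ih z1 z3 u1 v1 u3 v3 (by omega) hz1 hz3' h1 h3 hco3 hev3 hq3
        intro k
        constructor
        · intro hk
          have hk3 := (IH k).1 hk
          rcases l2 with l2 | l2
          · rw [show v2 = 2 * s * v1 - c ^ m * v3 by linarith]
            exact dvd_sub (hk.mul_left _) (hk3.mul_left _)
          · rw [show v2 = 2 * s * v1 + c ^ m * v3 by linarith]
            exact dvd_add (hk.mul_left _) (hk3.mul_left _)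
        · induction k with
          | zero => simp
          | succ k ihk =>
            intro hk
            have hk1 := ihk ((pow_dvd_pow 2 k.le_succ).trans hk)
            refine (IH _).2 (hv3 _ hk ?_)
            rw [pow_succ', mul_assoc]
            exact mul_dvd_mul_left 2 (hk1.mul_left _)
    intro z1 z2 u1 v1 u2 v2 hN hz1 hz2 h1 h2' hco hev hqd k
    rcases le_total z1 z2 with hz | hz
    · exact main z1 z2 u1 v1 u2 v2 hN hz1 hz h1 h2' hco hev hqd k
    · exact (main z2 z1 u2 v2 u1 v1 (by omega) hz2 hz h2' h1 (by rwa [add_comm])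
        (hev.imp_right And.symm) (hqd.imp_right And.symm) k).symm

/-- If the coordinates of `α₁` divide those of `α₂`, then `α₂` is plus or minus an odd power of
`α₁`. The divisibility is inherited by every `α₃` of the algorithm, so that `z₁ ≤ z₃` and each step
is a division by `α₁ ^ 2`. The elements are taken in `ℂ` through fixed square roots `rA`, `rB` of
`-A` and `B`. -/
lemma eq_pow {A B c : ℤ} (hc : 1 < c) (hA : Avoids c A) (hB : Avoids c B)
    (h2c : Avoids c 2) (hA0 : 0 < A) (hB0 : 0 < B) (α : ℤ → ℤ → ℂ) (rA rB : ℂ)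
    (hrA : rA ^ 2 = -A) (hrB : rB ^ 2 = B) (hα : ∀ u v : ℤ, α u v = u * rB + v * rA)
    {z1 : ℕ} {u1 v1 : ℤ} (h1 : NormRep A B c u1 v1 z1) (hz1 : 1 ≤ z1)
    (hBu : B * u1 ^ 2 ≠ 1) (hAv : A * v1 ^ 2 ≠ 1) :
    ∀ (N z2 : ℕ) (u2 v2 : ℤ), z2 ≤ N → 1 ≤ z2 →
    NormRep A B c u2 v2 z2 → Avoids c (u1 * v2 + u2 * v1) → u1 ∣ u2 → v1 ∣ v2 →
    ∃ m, z2 = (2 * m + 1) * z1 ∧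
      (α u2 v2 = α u1 v1 ^ (2 * m + 1) ∨ α u2 v2 = - α u1 v1 ^ (2 * m + 1)) := by
  have hc0 : c ≠ 0 := by omega
  have hle : ∀ (z2 : ℕ) (u2 v2 : ℤ), 1 ≤ z2 → B * u2 ^ 2 + A * v2 ^ 2 = c ^ z2 →
      Avoids c u2 → Avoids c v2 → u1 ∣ u2 → v1 ∣ v2 → z1 ≤ z2 := by
    intro z2 u2 v2 hz2 n2 hu hv hdu hdv
    have key : ∀ x y : ℤ, Avoids c y → x ∣ y → x ^ 2 ≤ y ^ 2 := by
      intro x y hy hxy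
      have y0 : y ≠ 0 := by
        rintro rfl
        obtain ⟨p, hp, hpc⟩ := Int.exists_prime_and_dvd (n := c) (by omega)
        exact hy p hp hpc (dvd_zero _)
      exact Int.le_of_dvd (by positivity) (pow_dvd_pow_of_dvd hxy 2)
    have i1 := key _ _ hu hdu
    have i2 := key _ _ hv hdv
    have : c ^ z1 ≤ c ^ z2 := by
      rw [← h1.norm, ← n2]; gcongr
    exact (pow_le_pow_iff_right₀ hc).1 this
  intro N
  induction N with
  | zero => intros; omega
  | succ N ih =>
    intro z2 u2 v2 hN hz2 h2 hco hdu hdv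
    have hz := hle z2 u2 v2 hz2 h2.norm h2.hu h2.hv hdu hdv
    rcases hz.eq_or_lt with rfl | hlt
    · obtain ⟨s, w, e1, e2, hn, hw⟩ := quotient_exists hc0 hB h1 h2 hco le_rfl
      rw [Nat.sub_self, pow_zero] at hn
      have hw0 : w = 0 := by
        by_contra hw0
        have i1 : 0 < A * B := mul_pos hA0 hB0
        have i2 : 0 < w ^ 2 := by positivity
        have i3 : A * B = 1 := by nlinarith [sq_nonneg s]
        have hA1 : A = 1 := by nlinarith
        have hB1 : B = 1 := by nlinarith
        subst hA1 hB1
        have hs : s = 0 := by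
          have : s ^ 2 = 0 := by nlinarith [sq_nonneg s]
          exact pow_eq_zero_iff two_ne_zero |>.1 this
        subst hs
        have hw1 : w * w = 1 := by nlinarith
        have d1 : u1 ∣ v1 := by
          rw [show v1 = -w * u2 by rw [e1]; linear_combination -v1 * hw1]
          exact hdu.mul_left _
        have d2 : v1 ∣ u1 := by
          rw [show u1 = w * v2 by rw [e2]; linear_combination -u1 * hw1]
          exact hdv.mul_left _
        have hsq : v1 ^ 2 = u1 ^ 2 := by
          rw [← Int.natAbs_sq v1, ← Int.natAbs_sq u1,
            Nat.dvd_antisymm (Int.natAbs_dvd_natAbs.2 d1) (Int.natAbs_dvd_natAbs.2 d2)]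
        have n1 := h1.norm
        rw [hsq] at n1
        exact h2c 2 Int.prime_two (Int.prime_two.dvd_of_dvd_pow ⟨u1 ^ 2, by rw [← n1]; ring⟩)
          dvd_rfl
      subst hw0
      have hs : s = 1 ∨ s = -1 := by
        have h6 : (s - 1) * (s + 1) = 0 := by linear_combination hn
        rcases mul_eq_zero.1 h6 with h | h
        · left; linarith
        · right; linarith
      refine ⟨0, by omega, ?_⟩
      rcases hs with rfl | rfl
      · left; simp [e1, e2]
      · right; simp [e1, e2, hα]; ring
    · obtain ⟨u3, v3, s, m, z3, n3, hz3, l1, l2, hrep, hlast⟩ :=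
          descent_step hc0 hA hB h2c h1 h2 hco hz1 hlt
      have hcop : ∀ x y, Avoids c x → x ∣ c ^ m * y → x ∣ y := fun x y hx hd =>
        ((hx.isCoprime hc0).symm.pow_right).dvd_of_dvd_mul_left hd
      have d1 : u1 ∣ u3 := by
        apply hcop _ _ h1.hu
        rw [show c ^ m * u3 = 2 * s * u1 - u2 by linarith]
        exact dvd_sub (dvd_mul_left _ _) hdu
      have d2 : v1 ∣ v3 := by
        apply hcop _ _ h1.hv
        rcases l2 with l2 | l2
        · rw [show c ^ m * v3 = 2 * s * v1 - v2 by linarith]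
          exact dvd_sub (dvd_mul_left _ _) hdv
        · rw [show c ^ m * v3 = v2 - 2 * s * v1 by linarith]
          exact dvd_sub hdv (dvd_mul_left _ _)
      have hz3' : 1 ≤ z3 := by
        by_contra h0
        obtain rfl : z3 = 0 := by omega
        rw [pow_zero] at n3
        have p1 : 0 ≤ A * v3 ^ 2 := by positivity
        have p2 : 0 ≤ B * u3 ^ 2 := by positivity
        have k1 : B * u1 ^ 2 ∣ B * u3 ^ 2 := mul_dvd_mul_left _ (pow_dvd_pow_of_dvd d1 2)
        have k2 : A * v1 ^ 2 ∣ A * v3 ^ 2 := mul_dvd_mul_left _ (pow_dvd_pow_of_dvd d2 2)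
        rcases p1.eq_or_lt with h | h
        · rw [← h, add_zero] at n3
          rw [n3] at k1
          exact hBu (Int.eq_one_of_dvd_one (by positivity) k1)
        · rw [show A * v3 ^ 2 = 1 by omega] at k2
          exact hAv (Int.eq_one_of_dvd_one (by positivity) k2)
      obtain ⟨h3, hco3⟩ := hrep hz3'
      have hge := hle z3 u3 v3 hz3' n3 h3.hu h3.hv d1 d2
      obtain ⟨hz', e1, e2⟩ := hlast.resolve_left (by omega)
      obtain ⟨j, hj, hpow⟩ := ih z3 u3 v3 (by omega) hz3' h3 hco3 d1 d2
      have hmul : α u2 v2 = α u3 v3 * α u1 v1 ^ 2 := by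
        simp only [hα]
        rw [e1, e2]
        push_cast
        linear_combination
          (-(2 * v1 * u1 * v3 + v1 ^ 2 * u3) * rB - v1 ^ 2 * v3 * rA) * hrA +
          (-(u1 ^ 2 * u3) * rB - (2 * u1 * v1 * u3 + u1 ^ 2 * v3) * rA) * hrB
      refine ⟨j + 1, by rw [hz', hj]; ring, ?_⟩
      rcases hpow with hp | hp
      · left; rw [hmul, hp]; ring
      · right; rw [hmul, hp]; ring

/-! ### Odd powers with the same imaginary part -/

/-- The cofactor `V_n(X, Y)` of `√X` in the real part of `(√X + √Y i)^n`, for `n = 2m + 1`. -/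
def reCofactor (X Y : ℤ) (m : ℕ) : ℤ :=
  ∑ i ∈ Finset.range (m + 1), ((2 * m + 1).choose (2 * i + 1) : ℤ) * X ^ i * (-Y) ^ (m - i)

lemma sum_range_even_odd {M : Type*} [AddCommMonoid M] (f : ℕ → M) (m : ℕ) :
    ∑ j ∈ Finset.range (2 * m), f j = ∑ i ∈ Finset.range m, (f (2 * i) + f (2 * i + 1)) := by
  induction m with
  | zero => simp
  | succ m ih =>
    rw [show 2 * (m + 1) = 2 * m + 1 + 1 by ring, Finset.sum_range_succ, Finset.sum_range_succ,
      Finset.sum_range_succ, ih, add_assoc]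

lemma re_pow_odd {r t : ℝ} {X Y : ℤ} (hr : r ^ 2 = X) (ht : t ^ 2 = Y) (m : ℕ) :
    (((r : ℂ) + t * Complex.I) ^ (2 * m + 1)).re = r * reCofactor X Y m := by
  have hrc : (r : ℂ) ^ 2 = ((X : ℝ) : ℂ) := by rw [← hr]; push_cast; rfl
  have htc : ((t : ℂ) * Complex.I) ^ 2 = ((-Y : ℝ) : ℂ) := by
    rw [mul_pow, Complex.I_sq, ← ht]; push_cast; ring
  rw [add_pow, show 2 * m + 1 + 1 = 2 * (m + 1) by ring, sum_range_even_odd, Complex.re_sum,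
    reCofactor]
  push_cast
  rw [Finset.mul_sum]
  refine Finset.sum_congr rfl fun i hi => ?_
  have him : i ≤ m := by simpa [Nat.lt_succ_iff] using hi
  rw [show 2 * m + 1 - 2 * i = 2 * (m - i) + 1 by omega,
    show 2 * m - 2 * i = 2 * (m - i) by omega, pow_succ _ (2 * (m - i)),
    pow_succ _ (2 * i), pow_mul, pow_mul, hrc, htc]
  have e1 : (((X : ℝ) : ℂ) ^ i * ((((-Y : ℝ)) : ℂ) ^ (m - i) * (t * Complex.I)) *
      ((2 * m + 1).choose (2 * i) : ℂ)) =
      ((((X : ℝ) ^ i * (-Y : ℝ) ^ (m - i) * t * ((2 * m + 1).choose (2 * i) : ℝ) : ℝ)) : ℂ)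
        * Complex.I := by
    push_cast; ring
  have e2 : (((X : ℝ) : ℂ) ^ i * r * ((((-Y : ℝ)) : ℂ) ^ (m - i)) *
      ((2 * m + 1).choose (2 * i + 1) : ℂ)) =
      (((r * ((2 * m + 1).choose (2 * i + 1) * (X : ℝ) ^ i * (-Y : ℝ) ^ (m - i)) : ℝ)) : ℂ) := by
    push_cast; ring
  rw [e1, e2, Complex.add_re, Complex.re_ofReal_mul, Complex.I_re, mul_zero, zero_add,
    Complex.ofReal_re]

lemma reCofactor_eq (X Y : ℤ) (m : ℕ) :
    reCofactor X Y m = (2 * m + 1) * (-Y) ^ m +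
      ∑ i ∈ Finset.range m, ((2 * m + 1).choose (2 * (i + 1) + 1) : ℤ) * X ^ (i + 1) *
        (-Y) ^ (m - (i + 1)) := by
  rw [reCofactor, Finset.sum_range_succ']
  simp
  ring

/-- If a power of `p` divides the cofactor of `√X` in `(√X + √Y i) ^ n`, where `p ∣ X` and
`p ∤ Y`, it divides `n`: the term `n (-Y) ^ m` has strictly smaller valuation than all others.
For `p = 3` this needs `9 ∣ X`, since `choose n 3 * X` may cancel it otherwise. -/
lemma pow_dvd_of_dvd_reCofactor {X Y : ℤ} {p : ℕ} (hp : p.Prime) (hp2 : p ≠ 2)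
    (hX : (p : ℤ) ∣ X) (hY : ¬ (p : ℤ) ∣ Y) (h3 : p = 3 → 9 ∣ X) (m k : ℕ)
    (h : (p : ℤ) ^ k ∣ reCofactor X Y m) : p ^ k ∣ 2 * m + 1 := by
  have hpZ : Prime (p : ℤ) := Nat.prime_iff_prime_int.1 hp
  induction k with
  | zero => simp
  | succ k ih =>
    have hk := ih ((pow_dvd_pow _ k.le_succ).trans h)
    have hterm : ∀ i, 1 ≤ i →
        (p : ℤ) ^ (k + 1) ∣ ((2 * m + 1).choose (2 * i + 1) : ℤ) * X ^ i := by
      intro i hi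
      obtain ⟨e, q, hq, he⟩ := Nat.exists_eq_pow_mul_and_not_dvd (n := 2 * i + 1) (by omega) p
        hp.ne_one
      have hle : p ^ e ≤ 2 * i + 1 := Nat.le_of_dvd (by omega) ⟨q, he⟩
      have hXi : (p : ℤ) ^ (e + 1) ∣ X ^ i := by
        by_cases hp3 : p = 3
        · subst hp3
          have h9 : ((3 : ℕ) : ℤ) ^ (2 * i) ∣ X ^ i := by
            rw [pow_mul]; exact pow_dvd_pow_of_dvd (by simpa using h3 rfl) i
          refine (pow_dvd_pow _ ?_).trans h9
          by_contra hlt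
          have h1 : 3 ^ (2 * i) ≤ 3 ^ e := Nat.pow_le_pow_right (by norm_num) (by omega)
          have h2 : ∀ i, 1 ≤ i → 2 * i + 1 < 3 ^ (2 * i) := by
            intro i hi
            induction i, hi using Nat.le_induction with
            | base => norm_num
            | succ j hj ih => rw [mul_add, pow_add]; omega
          have := h2 i hi
          omega
        · have hp5 : 5 ≤ p := by
            have := hp.two_le
            by_contra hlt
            interval_cases p <;> first | omega | exact absurd hp (by norm_num)
          refine (pow_dvd_pow _ ?_).trans (pow_dvd_pow_of_dvd hX i)
          by_contra hlt
          have h1 : p ^ i ≤ p ^ e := Nat.pow_le_pow_right hp.pos (by omega)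
          have h1' : 5 ^ i ≤ p ^ i := Nat.pow_le_pow_left hp5 i
          have h2 : ∀ i, 1 ≤ i → 2 * i + 1 < 5 ^ i := by
            intro i hi
            induction i, hi using Nat.le_induction with
            | base => norm_num
            | succ j hj ih => rw [pow_succ]; omega
          have := h2 i hi
          omega
      have hC : p ^ k ∣ (2 * m + 1).choose (2 * i + 1) * p ^ e := by
        have h1 : p ^ k ∣ (2 * m + 1).choose (2 * i + 1) * (2 * i + 1) := by
          have := Nat.add_one_mul_choose_eq (2 * m) (2 * i)
          rw [← this]; exact hk.mul_right _
        have h2 : (2 * m + 1).choose (2 * i + 1) * (2 * i + 1) =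
            (2 * m + 1).choose (2 * i + 1) * p ^ e * q := by rw [mul_assoc, ← he]
        rw [h2] at h1
        exact (Nat.Coprime.pow_left k ((Nat.Prime.coprime_iff_not_dvd hp).2 hq)).dvd_of_dvd_mul_right
          h1
      have hC' : (p : ℤ) ^ k ∣ ((2 * m + 1).choose (2 * i + 1) : ℤ) * p ^ e := by exact_mod_cast hC
      calc (p : ℤ) ^ (k + 1) = p ^ k * p := pow_succ _ _
        _ ∣ ((2 * m + 1).choose (2 * i + 1) : ℤ) * p ^ e * p := mul_dvd_mul_right hC' _
        _ = ((2 * m + 1).choose (2 * i + 1) : ℤ) * p ^ (e + 1) := by ring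
        _ ∣ _ := mul_dvd_mul_left _ hXi
    rw [reCofactor_eq, dvd_add_left] at h
    · have h' : (p : ℤ) ^ (k + 1) ∣ 2 * m + 1 :=
        (IsCoprime.pow ((Prime.coprime_iff_not_dvd hpZ).2 (by simpa using hY))).dvd_of_dvd_mul_right h
      exact_mod_cast h'
    · exact Finset.dvd_sum fun i _ => (hterm (i + 1) (by omega)).mul_right _

lemma three_pow_ge (l : ℕ) : 2 * l + 1 ≤ 3 ^ l := by
  induction l with
  | zero => simp
  | succ l ih => rw [pow_succ]; omega

/-- Let `r + t i = √(b ^ y) + √Y i`. If some odd power of it, beyond the first, has imaginary part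
`± t` and real part `± r b ^ d`, then it is the cube of `√3 + √10 i`. Otherwise `b ^ d` would divide
the exponent (directly, or after taking out the cube when `b ^ y` is divisible by `3` but not by
`9`), whereas the absolute value forces `b ^ d` to be at least `(b ^ y + Y) ^ m`. -/
lemma power_case {r t : ℝ} (hr : 0 < r) (ht : 0 < t) {b y Y m d : ℕ} (hb : 3 ≤ b) (hbo : Odd b)
    (hy : 1 ≤ y) (hY : Even Y) (hY0 : 0 < Y) (hcop : Nat.Coprime b Y) (hm : 1 ≤ m) (hd : 1 ≤ d)
    (hrX : r ^ 2 = (b : ℝ) ^ y) (htY : t ^ 2 = Y)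
    (hre : (((r : ℂ) + t * Complex.I) ^ (2 * m + 1)).re = r * b ^ d ∨
      (((r : ℂ) + t * Complex.I) ^ (2 * m + 1)).re = -(r * b ^ d))
    (him : (((r : ℂ) + t * Complex.I) ^ (2 * m + 1)).im = t ∨
      (((r : ℂ) + t * Complex.I) ^ (2 * m + 1)).im = -t) :
    b = 3 ∧ y = 1 ∧ Y = 10 ∧ m = 1 ∧ d = 3 := by
  obtain ⟨X, hX⟩ : ∃ X : ℕ, X = b ^ y := ⟨_, rfl⟩
  have hbX : b ∣ X := by rw [hX]; exact dvd_pow_self b (by omega)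
  have hX0 : 0 < X := by rw [hX]; positivity
  have hX3 : 3 ≤ X := hb.trans (Nat.le_of_dvd hX0 hbX)
  have hY2 : 2 ≤ Y := by obtain ⟨k, rfl⟩ := hY; omega
  have hrX' : r ^ 2 = ((X : ℤ) : ℝ) := by rw [hrX, hX]; push_cast; rfl
  have htY' : t ^ 2 = ((Y : ℤ) : ℝ) := by rw [htY]; push_cast; rfl
  have hrX2 : r ^ 2 = (X : ℝ) := by simpa using hrX'
  have hnorm : (X + Y) ^ (2 * m + 1) = X * (b ^ d) ^ 2 + Y := by
    have h1 : Complex.normSq (((r : ℂ) + t * Complex.I) ^ (2 * m + 1)) =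
        ((X : ℝ) + Y) ^ (2 * m + 1) := by
      rw [map_pow, Complex.normSq_add_mul_I, hrX2, htY]
    rw [Complex.normSq_apply] at h1
    have h2 : ((X : ℝ) + Y) ^ (2 * m + 1) = X * (b ^ d) ^ 2 + Y := by
      rw [← h1]
      rcases hre with hre | hre <;> rcases him with him | him <;> rw [hre, him, ← hrX2, ← htY] <;>
        ring
    exact_mod_cast h2
  have hsize : X * (X + Y) ^ (2 * m) ≤ X * (b ^ d) ^ 2 := by
    have h1 : 1 ≤ (X + Y) ^ (2 * m) := Nat.one_le_pow _ _ (by omega)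
    rw [pow_succ] at hnorm
    nlinarith
  obtain ⟨V, hV⟩ : ∃ V, V = reCofactor X Y m := ⟨_, rfl⟩
  have hrV := re_pow_odd hrX' htY' m
  rw [← hV] at hrV
  have hVb : V = b ^ d ∨ V = -b ^ d := by
    rcases hre with h | h
    · left
      rw [hrV] at h
      have := mul_left_cancel₀ hr.ne' h
      exact_mod_cast this
    · right
      rw [hrV, ← mul_neg] at h
      have := mul_left_cancel₀ hr.ne' h
      exact_mod_cast this
  have hVabs : V.natAbs = b ^ d := by
    rcases hVb with h | h <;> rw [h] <;> simp [Int.natAbs_pow]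
  have hdvdV : ∀ k : ℕ, k ∣ b ^ d ↔ (k : ℤ) ∣ V := by
    intro k; rw [← hVabs]; exact Int.natCast_dvd.symm
  have hpb : ∀ p : ℕ, p.Prime → p ∣ b → p ≠ 2 ∧ (p : ℤ) ∣ X ∧ ¬ (p : ℤ) ∣ Y := by
    intro p hp hpb
    refine ⟨?_, ?_, ?_⟩
    · rintro rfl
      exact (Nat.not_even_iff_odd.2 hbo) (even_iff_two_dvd.2 hpb)
    · exact_mod_cast hpb.trans hbX
    · intro h
      exact hp.one_lt.ne' (Nat.eq_one_of_dvd_coprimes hcop hpb (by exact_mod_cast h))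
  by_cases hcase : 3 ∣ b → 9 ∣ X
  · exfalso
    have hdiv : b ^ d ∣ 2 * m + 1 := by
      rw [Nat.dvd_iff_prime_pow_dvd_dvd]
      intro p k hp hpk
      rcases Nat.eq_zero_or_pos k with rfl | hk
      · simp
      have hpb' : p ∣ b := hp.dvd_of_dvd_pow ((dvd_pow_self p hk.ne').trans hpk)
      obtain ⟨h2, hX', hY'⟩ := hpb p hp hpb'
      refine pow_dvd_of_dvd_reCofactor hp h2 hX' hY' ?_ m k ?_
      · rintro rfl; exact_mod_cast hcase hpb'
      · rw [← hV]; exact_mod_cast (hdvdV _).1 hpk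
    have h1 : b ^ d ≤ 3 ^ m := (Nat.le_of_dvd (by omega) hdiv).trans (three_pow_ge m)
    have h2 : (b ^ d) ^ 2 ≤ 3 ^ (2 * m) := by
      rw [mul_comm 2 m, pow_mul]; exact Nat.pow_le_pow_left h1 2
    have h3 : 3 ^ (2 * m) < (X + Y) ^ (2 * m) := Nat.pow_lt_pow_left (by omega) (by omega)
    have := Nat.le_of_mul_le_mul_left hsize hX0
    omega
  · push Not at hcase
    obtain ⟨h3b, h9⟩ := hcase
    obtain rfl : y = 1 := by
      by_contra hy1
      apply h9
      rw [hX]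
      exact (pow_dvd_pow_of_dvd h3b 2).trans (pow_dvd_pow b (by omega))
    rw [pow_one] at hX
    subst hX
    have h3n : 3 ∣ 2 * m + 1 := by
      have h3V : ((3 : ℕ) : ℤ) ∣ V := (hdvdV 3).1 (h3b.trans (dvd_pow_self X (by omega)))
      obtain ⟨-, hX', hY'⟩ := hpb 3 Nat.prime_three h3b
      rw [hV, reCofactor_eq, dvd_add_left] at h3V
      · have h' : ((3 : ℕ) : ℤ) ∣ 2 * m + 1 :=
          (IsCoprime.pow_right ((Prime.coprime_iff_not_dvd Int.prime_three).2
            (by simpa using hY'))).dvd_of_dvd_mul_right h3V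
        exact_mod_cast h'
      · exact Finset.dvd_sum fun i _ =>
          ((hX'.trans (dvd_pow_self _ (by omega))).mul_left _).mul_right _
    obtain ⟨l, hl⟩ : ∃ l, 2 * m + 1 = 3 * (2 * l + 1) := by
      obtain ⟨k, hk⟩ := h3n
      exact ⟨k / 2, by omega⟩
    -- regroup `α ^ n = (α ^ 3) ^ (n / 3)`
    have hcube : ((r : ℂ) + t * Complex.I) ^ 3 =
        ((r * ((X : ℤ) - 3 * (Y : ℤ) : ℤ) : ℝ) : ℂ) + ((t * (3 * (X : ℤ) - (Y : ℤ) : ℤ) : ℝ) : ℂ)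
          * Complex.I := by
      have hrc : (r : ℂ) ^ 2 = X := by exact_mod_cast congrArg ((↑) : ℝ → ℂ) hrX2
      have htc : (t : ℂ) ^ 2 = Y := by exact_mod_cast congrArg ((↑) : ℝ → ℂ) htY
      push_cast
      linear_combination (r + 3 * t * Complex.I) * hrc + (-3 * r - t * Complex.I) * htc +
        (3 * r * t ^ 2 + t ^ 3 * Complex.I) * Complex.I_sq
    obtain ⟨V', hV'⟩ : ∃ V', V' = reCofactor (X * (X - 3 * Y) ^ 2) (Y * (3 * X - Y) ^ 2) l :=
      ⟨_, rfl⟩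
    have hVV' : V = (X - 3 * Y) * V' := by
      have h1 := re_pow_odd (r := r * ((X : ℤ) - 3 * (Y : ℤ) : ℤ))
        (t := t * (3 * (X : ℤ) - (Y : ℤ) : ℤ)) (X := X * (X - 3 * Y) ^ 2)
        (Y := Y * (3 * X - Y) ^ 2) (by rw [mul_pow, hrX']; push_cast; ring)
        (by rw [mul_pow, htY']; push_cast; ring) l
      rw [← hcube, ← pow_mul, ← hl, hrV, mul_assoc, ← hV'] at h1
      have := mul_left_cancel₀ hr.ne' h1
      exact_mod_cast this
    have hk : V'.natAbs ≤ 2 * l + 1 := by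
      refine Nat.le_of_dvd (by omega) ?_
      rw [Nat.dvd_iff_prime_pow_dvd_dvd]
      intro p k hp hpk
      rcases Nat.eq_zero_or_pos k with rfl | hk
      · simp
      have hpV' : ((p ^ k : ℕ) : ℤ) ∣ V' := Int.natCast_dvd.2 hpk
      have hpb' : p ∣ X := hp.dvd_of_dvd_pow ((dvd_pow_self p hk.ne').trans
        ((hdvdV _).2 (by rw [hVV']; exact hpV'.mul_left _)))
      obtain ⟨h2, hX', hY'⟩ := hpb p hp hpb'
      have hpZ : Prime (p : ℤ) := Nat.prime_iff_prime_int.1 hp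
      refine pow_dvd_of_dvd_reCofactor hp h2 (hX'.mul_right ((X - 3 * Y) ^ 2))
        (Y := Y * (3 * X - Y) ^ 2) ?_ ?_ l k ?_
      · intro hdv
        rcases hpZ.dvd_or_dvd hdv with h | h
        · exact hY' h
        · have := hpZ.dvd_of_dvd_pow h
          exact hY' ((dvd_sub_right (hX'.mul_left 3)).1 this)
      · rintro rfl
        have h3 : (3 : ℤ) ∣ (X - 3 * Y : ℤ) := dvd_sub (by exact_mod_cast hX') (dvd_mul_right _ _)
        exact ((pow_dvd_pow_of_dvd h3 2).mul_left _)
      · rw [← hV']; exact_mod_cast hpV'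
    obtain rfl : l = 0 := by
      by_contra hl0
      have hVsq : V ^ 2 = ((X ^ d : ℕ) : ℤ) ^ 2 := by
        rw [← hVabs, Int.natAbs_sq]
      have hV'sq : V' ^ 2 ≤ ((3 ^ l : ℕ) : ℤ) ^ 2 := by
        rw [← Int.natAbs_sq V']
        have := hk.trans (three_pow_ge l)
        gcongr
      have hcb : (X : ℤ) * (X - 3 * Y) ^ 2 ≤ (X + Y) ^ 3 := by
        have : (0 : ℤ) ≤ Y * (3 * X - Y) ^ 2 := by positivity
        linarith [show ((X : ℤ) + Y) ^ 3 = X * (X - 3 * Y) ^ 2 + Y * (3 * X - Y) ^ 2 by ring]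
      have h1 : (X : ℤ) * (X + Y) ^ (2 * m) ≤ (X + Y) ^ 3 * ((3 ^ l : ℕ) : ℤ) ^ 2 := by
        calc (X : ℤ) * (X + Y) ^ (2 * m) ≤ X * ((X ^ d : ℕ) : ℤ) ^ 2 := by exact_mod_cast hsize
          _ = (X * (X - 3 * Y) ^ 2) * V' ^ 2 := by rw [← hVsq, hVV']; ring
          _ ≤ (X + Y) ^ 3 * ((3 ^ l : ℕ) : ℤ) ^ 2 := by gcongr
      have h2 : X * (X + Y) ^ (2 * m) ≤ (X + Y) ^ 3 * (3 ^ l) ^ 2 := by exact_mod_cast h1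
      have h3 : (X + Y) ^ 3 * 9 ^ l < (X + Y) ^ 3 * (X + Y) ^ (2 * m - 3) := by
        refine Nat.mul_lt_mul_of_pos_left ?_ (by positivity)
        calc 9 ^ l < ((X + Y) ^ 5) ^ l := Nat.pow_lt_pow_left
              (lt_of_lt_of_le (by norm_num) (Nat.pow_le_pow_left (show 5 ≤ X + Y by omega) 5)) hl0
          _ = (X + Y) ^ (5 * l) := by rw [pow_mul]
          _ ≤ _ := Nat.pow_le_pow_right (by omega) (by omega)
      rw [← pow_mul 3 l 2, mul_comm l 2, pow_mul 3 2 l, show 3 ^ 2 = 9 by norm_num] at h2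
      rw [← pow_add, show 3 + (2 * m - 3) = 2 * m by omega] at h3
      have h4 : (X + Y) ^ (2 * m) ≤ X * (X + Y) ^ (2 * m) := Nat.le_mul_of_pos_left _ hX0
      omega
    obtain rfl : m = 1 := by omega
    have hU : (3 * (X : ℤ) - Y = 1) ∨ 3 * (X : ℤ) - Y = -1 := by
      rw [show 2 * 1 + 1 = 3 by norm_num, hcube] at him
      simp only [Complex.add_im, Complex.mul_I_im, Complex.ofReal_im, Complex.ofReal_re,
        zero_add] at him
      rcases him with h | h
      · left
        have := mul_left_cancel₀ ht.ne' (h.trans (mul_one t).symm)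
        exact_mod_cast this
      · right
        have := mul_left_cancel₀ ht.ne' (h.trans (show -t = t * (-1) by ring))
        exact_mod_cast this
    have hV1 : V' = 1 := by rw [hV']; simp [reCofactor]
    rw [hV1, mul_one] at hVV'
    have hX3' : X = 3 := by
      have h1 : X ∣ 3 * Y := by
        have h2 : (X : ℤ) ∣ V := (hdvdV X).1 (dvd_pow_self X (by omega))
        rw [hVV', dvd_sub_right dvd_rfl] at h2
        exact_mod_cast h2
      have := hcop.dvd_of_dvd_mul_right h1
      have := Nat.le_of_dvd (by norm_num) this
      omega
    subst hX3'
    have hd3 : 3 ^ d = (3 * Y - 3 : ℤ) := by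
      rcases hVb with h | h
      · have : (0 : ℤ) < 3 ^ d := by positivity
        push_cast at *
        omega
      · push_cast at *
        omega
    rcases hU with h | h
    · exfalso
      obtain rfl : Y = 8 := by push_cast at h; omega
      have h7 : (7 : ℤ) ∣ 3 ^ d := by rw [hd3]; norm_num
      have := Prime.dvd_of_dvd_pow (by norm_num) h7
      norm_num at this
    · obtain rfl : Y = 10 := by push_cast at h; omega
      refine ⟨rfl, rfl, rfl, rfl, ?_⟩
      have : 3 ^ d = 3 ^ 3 := by
        have : (3 ^ d : ℤ) = 3 ^ 3 := by rw [hd3]; norm_num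
        exact_mod_cast this
      exact Nat.pow_right_injective (by norm_num) this

/-! ### Two solutions with compatible signs -/

lemma Avoids.pow {c x : ℤ} (hx : Avoids c x) (k : ℕ) : Avoids c (x ^ k) :=
  fun p hp hpc hd => hx p hp hpc (hp.dvd_of_dvd_pow hd)

lemma avoids_of_coprime {a c : ℕ} (h : Nat.Coprime a c) : Avoids c a := by
  intro p hp hpc hpa
  have := Int.isCoprime_iff_gcd_eq_one.2 (show Int.gcd (a : ℤ) c = 1 by simpa using h)
  exact hp.not_isUnit (this.isUnit_of_dvd' hpa hpc)

lemma exp_eq_of_two_adic {a e1 e2 : ℕ} (ha : Even a) (ha1 : 1 < a)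
    (h : ∀ k : ℕ, 2 ^ k ∣ (a : ℤ) ^ e1 ↔ 2 ^ k ∣ (a : ℤ) ^ e2) : e1 = e2 := by
  have key : ∀ e1 e2 : ℕ, e1 < e2 → ¬ ∀ k : ℕ, 2 ^ k ∣ (a : ℤ) ^ e1 ↔ 2 ^ k ∣ (a : ℤ) ^ e2 := by
    intro e1 e2 hlt h
    obtain ⟨k, q, hq, he⟩ := Nat.exists_eq_pow_mul_and_not_dvd (n := a ^ e1) (by positivity) 2
      (by norm_num)
    have h1 : (2 : ℤ) ^ (k + 1) ∣ (a : ℤ) ^ e2 := by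
      have h2 : 2 ^ (k + 1) ∣ a ^ e2 := by
        rw [pow_succ]
        exact (mul_dvd_mul (Dvd.intro _ he.symm) ha.two_dvd).trans
          (by rw [← pow_succ]; exact pow_dvd_pow _ hlt)
      exact_mod_cast h2
    have h3 : 2 ^ (k + 1) ∣ a ^ e1 := by exact_mod_cast (h _).2 h1
    rw [he, pow_succ] at h3
    exact hq (Nat.dvd_of_mul_dvd_mul_left (by positivity) h3)
  rcases lt_trichotomy e1 e2 with h1 | h1 | h1
  · exact absurd h (key _ _ h1)
  · exact h1
  · exact absurd (fun k => (h k).symm) (key _ _ h1)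

lemma re_ofReal_add_ofReal_mul_I (P Q : ℝ) : ((P : ℂ) + (Q : ℂ) * Complex.I).re = P := by simp

lemma im_ofReal_add_ofReal_mul_I (P Q : ℝ) : ((P : ℂ) + (Q : ℂ) * Complex.I).im = Q := by simp

/-- Two distinct solutions in the same parity class, for which `b ^ f₁ a ^ e₂` is congruent to
`± b ^ f₂ a ^ e₁` modulo `c`, are the two solutions of `10 ^ x + 3 ^ y = 13 ^ z`. The sign `σ` is
absorbed into the imaginary coordinate of the second element. -/
lemma pair_ordered {a b c x0 y0 e1 e2 f1 f2 z1 z2 : ℕ} (ha : Even a) (ha1 : 1 < a) (hbo : Odd b)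
    (hb1 : 1 < b) (hco : Odd c) (hc1 : 1 < c) (hab : Nat.Coprime a b) (hac : Nat.Coprime a c)
    (hbc : Nat.Coprime b c) (hx1 : 0 < x0 + 2 * e1) (hx2 : 0 < x0 + 2 * e2)
    (hy1 : 0 < y0 + 2 * f1) (hy2 : 0 < y0 + 2 * f2) (hz1 : 0 < z1) (hz2 : 0 < z2)
    (h1 : a ^ (x0 + 2 * e1) + b ^ (y0 + 2 * f1) = c ^ z1)
    (h2 : a ^ (x0 + 2 * e2) + b ^ (y0 + 2 * f2) = c ^ z2)
    (hf : f1 ≤ f2) (hne : ¬ (e1 = e2 ∧ f1 = f2)) (σ : ℤ) (hσ : σ = 1 ∨ σ = -1)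
    (huni : (c : ℤ) ∣ (b : ℤ) ^ f1 * a ^ e2 - σ * (b ^ f2 * a ^ e1)) :
    a = 10 ∧ b = 3 ∧ c = 13 ∧ x0 + 2 * e1 = 1 ∧ y0 + 2 * f1 = 1 ∧ z1 = 1 ∧
      x0 + 2 * e2 = 1 ∧ y0 + 2 * f2 = 7 ∧ z2 = 3 := by
  have hc : (c : ℤ) ≠ 0 := by positivity
  have hAa := avoids_of_coprime hac
  have hAb := avoids_of_coprime hbc
  have h2c : Avoids c 2 := avoids_of_coprime (a := 2) (Nat.coprime_two_left.2 hco)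
  have hσ2 : σ ^ 2 = 1 := by rcases hσ with rfl | rfl <;> norm_num
  have hAσ : Avoids c σ := by
    intro p hp _ hd
    exact hp.not_dvd_one (hσ2 ▸ dvd_pow hd two_ne_zero)
  -- a prime divisor of `b`, which plays for the real coordinate the role of `2` for the other one
  obtain ⟨q, hq, hqb⟩ := Nat.exists_prime_and_dvd hb1.ne'
  have hqZ : Prime (q : ℤ) := Nat.prime_iff_prime_int.1 hq
  have hqbZ : (q : ℤ) ∣ b := by exact_mod_cast hqb
  have haZ : (2 : ℤ) ∣ a := by exact_mod_cast ha.two_dvd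
  have hr1 : NormRep ((a : ℤ) ^ x0) ((b : ℤ) ^ y0) c (b ^ f1) (a ^ e1) z1 := by
    refine ⟨?_, hAb.pow _, hAa.pow _⟩
    have : (a : ℤ) ^ (x0 + 2 * e1) + b ^ (y0 + 2 * f1) = c ^ z1 := by exact_mod_cast h1
    rw [← this]; ring
  have hr2 : NormRep ((a : ℤ) ^ x0) ((b : ℤ) ^ y0) c (b ^ f2) (σ * a ^ e2) z2 := by
    refine ⟨?_, hAb.pow _, hAσ.mul (hAa.pow _)⟩
    have : (a : ℤ) ^ (x0 + 2 * e2) + b ^ (y0 + 2 * f2) = c ^ z2 := by exact_mod_cast h2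
    rw [← this, mul_pow, hσ2]; ring
  have hcoh : Avoids c ((b : ℤ) ^ f1 * (σ * a ^ e2) + b ^ f2 * a ^ e1) := by
    intro p hp hpc hd
    have hd2 := dvd_add hd ((hpc.trans huni).mul_left σ)
    rw [show (b : ℤ) ^ f1 * (σ * a ^ e2) + b ^ f2 * a ^ e1 +
      σ * ((b : ℤ) ^ f1 * a ^ e2 - σ * (b ^ f2 * a ^ e1)) = 2 * (σ * (b ^ f1 * a ^ e2)) by
        linear_combination (-(b : ℤ) ^ f2 * a ^ e1) * hσ2] at hd2
    exact (h2c.mul (hAσ.mul ((hAb.pow f1).mul (hAa.pow e2)))) p hp hpc hd2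
  have hval := val_eq hc (hAa.pow x0) (hAb.pow y0) h2c (by positivity) (by positivity) hqZ
    (fun h => hAb q hqZ h hqbZ) (z1 + z2) z1 z2 _ _ _ _ le_rfl hz1 hz2 hr1 hr2 hcoh
    (by
      rcases Nat.eq_zero_or_pos x0 with rfl | h
      · right
        exact ⟨dvd_pow haZ (by omega), (dvd_pow haZ (by omega)).mul_left _⟩
      · left; exact dvd_pow haZ h.ne')
    (by
      rcases Nat.eq_zero_or_pos y0 with rfl | h
      · right
        exact ⟨dvd_pow hqbZ (by omega), dvd_pow hqbZ (by omega)⟩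
      · left; exact dvd_pow hqbZ h.ne')
  have hE : e1 = e2 := by
    refine exp_eq_of_two_adic ha ha1 fun k => (hval k).trans ?_
    rcases hσ with rfl | rfl <;> simp
  subst hE
  have hflt : f1 < f2 := lt_of_le_of_ne hf fun h => hne ⟨rfl, h⟩
  obtain ⟨d, rfl⟩ := Nat.exists_eq_add_of_le hf
  have hBpos : (0 : ℝ) < (b : ℝ) ^ y0 := by positivity
  have hApos : (0 : ℝ) < (a : ℝ) ^ x0 := by positivity
  obtain ⟨sB, hsB⟩ : ∃ s, s = √((b : ℝ) ^ y0) := ⟨_, rfl⟩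
  obtain ⟨sA, hsA⟩ : ∃ s, s = √((a : ℝ) ^ x0) := ⟨_, rfl⟩
  have hsB0 : 0 < sB := by rw [hsB]; exact Real.sqrt_pos.2 hBpos
  have hsA0 : 0 < sA := by rw [hsA]; exact Real.sqrt_pos.2 hApos
  have hsB2 : sB ^ 2 = (b : ℝ) ^ y0 := by rw [hsB]; exact Real.sq_sqrt hBpos.le
  have hsA2 : sA ^ 2 = (a : ℝ) ^ x0 := by rw [hsA]; exact Real.sq_sqrt hApos.le
  obtain ⟨m, hm, hpow⟩ := eq_pow (by exact_mod_cast hc1) (hAa.pow x0) (hAb.pow y0) h2c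
    (by positivity) (by positivity) (fun u v : ℤ => (u : ℂ) * sB + v * (sA * Complex.I))
    (sA * Complex.I) sB
    (by rw [mul_pow, Complex.I_sq]; push_cast; rw [← Complex.ofReal_pow, hsA2]; push_cast; ring)
    (by rw [← Complex.ofReal_pow, hsB2]; push_cast; rfl) (fun _ _ => rfl) hr1 hz1
    (by
      have : 1 < b ^ (y0 + 2 * f1) := Nat.one_lt_pow hy1.ne' hb1
      have h : (b : ℤ) ^ y0 * (b ^ f1) ^ 2 = ((b ^ (y0 + 2 * f1) : ℕ) : ℤ) := by push_cast; ring
      rw [h]; exact_mod_cast this.ne')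
    (by
      have : 1 < a ^ (x0 + 2 * e1) := Nat.one_lt_pow hx1.ne' ha1
      have h : (a : ℤ) ^ x0 * (a ^ e1) ^ 2 = ((a ^ (x0 + 2 * e1) : ℕ) : ℤ) := by push_cast; ring
      rw [h]; exact_mod_cast this.ne')
    z2 z2 _ _ le_rfl hz2 hr2 hcoh (pow_dvd_pow _ hf) (dvd_mul_left _ _)
  have hα1 : (((b : ℤ) ^ f1 : ℤ) : ℂ) * sB + (((a : ℤ) ^ e1 : ℤ) : ℂ) * (sA * Complex.I) =
      (((b : ℝ) ^ f1 * sB : ℝ) : ℂ) + (((a : ℝ) ^ e1 * sA : ℝ) : ℂ) * Complex.I := by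
    push_cast; ring
  have hα2 : (((b : ℤ) ^ (f1 + d) : ℤ) : ℂ) * sB + ((σ * (a : ℤ) ^ e1 : ℤ) : ℂ) *
      (sA * Complex.I) = (((b : ℝ) ^ f1 * sB * b ^ d : ℝ) : ℂ) +
        ((σ * ((a : ℝ) ^ e1 * sA) : ℝ) : ℂ) * Complex.I := by
    push_cast; ring
  simp only [hα1, hα2] at hpow
  -- `m = 0` would give `z₁ = z₂`, hence `f₁ = f₂`
  have hm1 : 1 ≤ m := by
    by_contra hm0
    obtain rfl : m = 0 := by omega
    rw [mul_zero, zero_add, one_mul] at hm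
    rw [hm, ← h1, add_right_inj] at h2
    have := Nat.pow_right_injective hb1 h2
    omega
  obtain ⟨r1, r2, r3, r4, r5⟩ := power_case (r := (b : ℝ) ^ f1 * sB) (t := (a : ℝ) ^ e1 * sA)
    (b := b) (y := y0 + 2 * f1) (Y := a ^ (x0 + 2 * e1)) (m := m) (d := d)
    (by positivity) (by positivity) (by obtain ⟨k, rfl⟩ := hbo; omega) hbo hy1
    (ha.pow_of_ne_zero hx1.ne') (by positivity) (hab.symm.pow_right _) hm1 (by omega)
    (by rw [mul_pow, hsB2]; ring) (by rw [mul_pow, hsA2]; push_cast; ring)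
    (by
      rcases hpow with h | h
      · left; rw [← h, re_ofReal_add_ofReal_mul_I]
      · right; rw [← neg_eq_iff_eq_neg.2 h, Complex.neg_re, re_ofReal_add_ofReal_mul_I])
    (by
      have him : ((σ : ℝ) * ((a : ℝ) ^ e1 * sA)) = (a : ℝ) ^ e1 * sA ∨
          ((σ : ℝ) * ((a : ℝ) ^ e1 * sA)) = -((a : ℝ) ^ e1 * sA) := by
        rcases hσ with rfl | rfl
        · left; push_cast; ring
        · right; push_cast; ring
      rcases hpow with h | h
      · rw [← h, im_ofReal_add_ofReal_mul_I]; exact him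
      · rw [← neg_eq_iff_eq_neg.2 h, Complex.neg_im, im_ofReal_add_ofReal_mul_I,
          neg_inj, neg_eq_iff_eq_neg]
        exact him.symm)
  subst r1 r4 r5
  have hx : x0 + 2 * e1 = 1 := by
    by_contra h
    have : 2 ^ 2 ∣ a ^ (x0 + 2 * e1) :=
      (pow_dvd_pow_of_dvd ha.two_dvd 2).trans (pow_dvd_pow a (by omega))
    rw [r3] at this
    norm_num at this
  rw [hx, pow_one] at r3
  subst r3
  rw [hx, r2] at h1
  have hz : z1 = 1 := by
    by_contra h
    have h13 : Nat.Prime (c ^ z1) := by rw [← h1]; norm_num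
    exact Nat.Prime.not_prime_pow (by omega) h13
  subst hz
  norm_num at h1
  refine ⟨rfl, rfl, by omega, hx, r2, rfl, hx, by omega, by omega⟩

/-! ### Choosing two of three exponent vectors -/

/-- Three vectors of a lattice of rank two satisfy a relation that is nontrivial modulo `2`: the
cross products give a nonzero relation unless the vectors are parallel, and common factors `2` can
be divided out. -/
lemma exists_relation (g1 g2 g3 : ℤ × ℤ) : ∃ k1 k2 k3 : ℤ,
    ¬ (Even k1 ∧ Even k2 ∧ Even k3) ∧ k1 • g1 + k2 • g2 + k3 • g3 = 0 := by
  have key : ∀ (N : ℕ) (k1 k2 k3 : ℤ), k1.natAbs + k2.natAbs + k3.natAbs ≤ N →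
      ¬ (k1 = 0 ∧ k2 = 0 ∧ k3 = 0) → k1 • g1 + k2 • g2 + k3 • g3 = 0 →
      ∃ k1 k2 k3 : ℤ, ¬ (Even k1 ∧ Even k2 ∧ Even k3) ∧ k1 • g1 + k2 • g2 + k3 • g3 = 0 := by
    intro N
    induction N with
    | zero => intros; omega
    | succ N ih =>
      intro k1 k2 k3 hN h0 h
      by_cases hev : Even k1 ∧ Even k2 ∧ Even k3
      · obtain ⟨⟨l1, rfl⟩, ⟨l2, rfl⟩, ⟨l3, rfl⟩⟩ := hev
        refine ih l1 l2 l3 (by omega) (by omega) ?_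
        have h2 : (2 : ℤ) • (l1 • g1 + l2 • g2 + l3 • g3) = 0 := by
          rw [← h]; module
        exact (smul_eq_zero.1 h2).resolve_left two_ne_zero
      · exact ⟨k1, k2, k3, hev, h⟩
  obtain ⟨x1, y1⟩ := g1
  obtain ⟨x2, y2⟩ := g2
  obtain ⟨x3, y3⟩ := g3
  by_cases h : x2 * y3 - x3 * y2 = 0 ∧ x3 * y1 - x1 * y3 = 0 ∧ x1 * y2 - x2 * y1 = 0
  · by_cases h1 : x1 = 0 ∧ y1 = 0
    · exact ⟨1, 0, 0, by simp, by simp [h1]⟩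
    by_cases hx : x1 = 0
    · refine key _ y2 (-y1) 0 le_rfl (by rintro ⟨-, h, -⟩; exact h1 ⟨hx, by simpa using h⟩) ?_
      ext
      · simp; linarith [h.2.2]
      · simp; ring
    · refine key _ x2 (-x1) 0 le_rfl (by rintro ⟨-, h, -⟩; exact hx (by simpa using h)) ?_
      ext
      · simp; ring
      · simp; linarith [h.2.2]
  · refine key _ _ _ _ le_rfl h ?_
    ext <;> simp <;> ring

/-- The difference of `v` and `w` is divisible by two and `φ` maps its half to `0` or `ε`. In the
application `φ` takes values in the additively written `(ℤ / c)ˣ` and `ε` is the class of `-1`. -/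
def Uniform {A : Type*} [AddCommGroup A] (φ : ℤ × ℤ →+ A) (ε : A) (v w : ℤ × ℤ) : Prop :=
  ∃ d : ℤ × ℤ, w = v + (2 : ℤ) • d ∧ (φ d = 0 ∨ φ d = ε)

lemma smul_of_even {A : Type*} [AddCommGroup A] {x : A} (hx : (2 : ℤ) • x = 0) {k : ℤ}
    (hk : Even k) : k • x = 0 := by
  obtain ⟨l, rfl⟩ := hk
  rw [← two_mul, mul_comm, mul_smul, hx, smul_zero]

lemma smul_of_odd {A : Type*} [AddCommGroup A] {x : A} (hx : (2 : ℤ) • x = 0) {k : ℤ}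
    (hk : Odd k) : k • x = x := by
  obtain ⟨l, rfl⟩ := hk
  rw [add_smul, mul_comm, mul_smul, hx, smul_zero, one_smul, zero_add]

lemma map_half {A : Type*} [AddCommGroup A] {φ : ℤ × ℤ →+ A} {ε : A} {v w d : ℤ × ℤ}
    (hv : φ v = ε) (hw : φ w = ε) (h : w = v + (2 : ℤ) • d) : (2 : ℤ) • φ d = 0 := by
  have := congrArg φ h
  rw [map_add, map_zsmul, hv, hw] at this
  simpa using this.symm

lemma exists_half_of_odd {v w d : ℤ × ℤ} {k l m : ℤ} (hk : Odd k) (hl : Odd l) (hm : Even m)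
    (h : k • v + l • w + m • d = 0) : ∃ e, w = v + (2 : ℤ) • e := by
  obtain ⟨k, rfl⟩ := hk
  obtain ⟨l, rfl⟩ := hl
  obtain ⟨m, rfl⟩ := hm
  refine ⟨-((k + 1) • v + l • w + m • d), ?_⟩
  rw [← sub_eq_zero, ← h]
  module

/-- Three vectors on which `φ` takes the value `ε` of order two contain a pair as in `Uniform`. All
elements of the target that occur are killed by `2`, so only the parities of the coefficients of a
relation matter, and each possible parity pattern either identifies the image of a half-difference,
or puts two vectors into the same class modulo `2`, or contradicts `ε ≠ 0`. -/
lemma uniform_exists {A : Type*} [AddCommGroup A] {φ : ℤ × ℤ →+ A} {ε : A}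
    (h2 : (2 : ℤ) • ε = 0) (h0 : ε ≠ 0) {v1 v2 v3 : ℤ × ℤ}
    (h1 : φ v1 = ε) (h2' : φ v2 = ε) (h3 : φ v3 = ε) :
    Uniform φ ε v1 v2 ∨ Uniform φ ε v1 v3 ∨ Uniform φ ε v2 v3 := by
  have hneg : ∀ {x : A}, (2 : ℤ) • x = 0 → -x = x := fun {x} hx => by
    rw [neg_eq_iff_add_eq_zero, ← two_zsmul, hx]
  -- the case of two vectors in one class modulo `2` and the third one in another
  have two : ∀ v w u : ℤ × ℤ, φ v = ε → φ w = ε → φ u = ε → (∃ d, w = v + (2 : ℤ) • d) →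
      (¬ ∃ e, u = v + (2 : ℤ) • e) → Uniform φ ε v w := by
    rintro v w u hv hw hu ⟨d, hd⟩ hne
    refine ⟨d, hd, ?_⟩
    have hd2 := map_half hv hw hd
    obtain ⟨k1, k2, k3, hodd, hrel⟩ := exists_relation v u d
    have hφ := congrArg φ hrel
    simp only [map_add, map_zsmul, hv, hu, map_zero] at hφ
    rcases Int.even_or_odd k1 with e1 | e1 <;> rcases Int.even_or_odd k2 with e2 | e2 <;>
      rcases Int.even_or_odd k3 with e3 | e3 <;>
      simp only [smul_of_even h2, smul_of_odd h2, smul_of_even hd2, smul_of_odd hd2, e1, e2, e3,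
        add_zero, zero_add] at hφ
    · exact absurd ⟨e1, e2, e3⟩ hodd
    · exact Or.inl hφ
    · exact absurd hφ h0
    · exact Or.inr (by rw [← hneg hd2, ← eq_neg_of_add_eq_zero_left hφ])
    · exact absurd hφ h0
    · exact Or.inr (by rw [← hneg hd2, ← eq_neg_of_add_eq_zero_left hφ])
    · exact absurd (exists_half_of_odd e1 e2 e3 hrel) hne
    · rw [← two_zsmul, h2, zero_add] at hφ
      exact Or.inl hφ
  by_cases p12 : ∃ d, v2 = v1 + (2 : ℤ) • d
  · by_cases p13 : ∃ d, v3 = v1 + (2 : ℤ) • d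
    · obtain ⟨d2, hd2⟩ := p12
      obtain ⟨d3, hd3⟩ := p13
      have q2 := map_half h1 h2' hd2
      have q3 := map_half h1 h3 hd3
      have hd32 : v3 = v2 + (2 : ℤ) • (d3 - d2) := by rw [hd2, hd3]; module
      obtain ⟨k1, k2, k3, hodd, hrel⟩ := exists_relation v1 d2 d3
      have hφ := congrArg φ hrel
      simp only [map_add, map_zsmul, h1, map_zero] at hφ
      rcases Int.even_or_odd k1 with e1 | e1 <;> rcases Int.even_or_odd k2 with e2 | e2 <;>
        rcases Int.even_or_odd k3 with e3 | e3 <;>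
        simp only [smul_of_even h2, smul_of_odd h2, smul_of_even q2, smul_of_odd q2,
          smul_of_even q3, smul_of_odd q3, e1, e2, e3, add_zero, zero_add] at hφ
      · exact absurd ⟨e1, e2, e3⟩ hodd
      · exact Or.inr (Or.inl ⟨d3, hd3, Or.inl hφ⟩)
      · exact Or.inl ⟨d2, hd2, Or.inl hφ⟩
      · refine Or.inr (Or.inr ⟨_, hd32, Or.inl ?_⟩)
        rw [map_sub, sub_eq_add_neg, hneg q2, add_comm, hφ]
      · exact absurd hφ h0
      · refine Or.inr (Or.inl ⟨d3, hd3, Or.inr ?_⟩)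
        rw [← hneg q3, ← eq_neg_of_add_eq_zero_left hφ]
      · refine Or.inl ⟨d2, hd2, Or.inr ?_⟩
        rw [← hneg q2, ← eq_neg_of_add_eq_zero_left hφ]
      · refine Or.inr (Or.inr ⟨_, hd32, Or.inr ?_⟩)
        rw [map_sub, sub_eq_add_neg, hneg q2, ← hneg h2, eq_neg_iff_add_eq_zero, ← hφ]
        abel
    · exact Or.inl (two _ _ _ h1 h2' h3 p12 p13)
  by_cases p13 : ∃ d, v3 = v1 + (2 : ℤ) • d
  · exact Or.inr (Or.inl (two _ _ _ h1 h3 h2' p13 p12))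
  by_cases p23 : ∃ d, v3 = v2 + (2 : ℤ) • d
  · refine Or.inr (Or.inr (two _ _ _ h2' h3 h1 p23 ?_))
    rintro ⟨e, he⟩
    exact p12 ⟨-e, by rw [he]; module⟩
  -- three different classes are impossible
  exfalso
  obtain ⟨k1, k2, k3, hodd, hrel⟩ := exists_relation v1 v2 v3
  have hφ := congrArg φ hrel
  simp only [map_add, map_zsmul, h1, h2', h3, map_zero] at hφ
  rcases Int.even_or_odd k1 with e1 | e1 <;> rcases Int.even_or_odd k2 with e2 | e2 <;>
    rcases Int.even_or_odd k3 with e3 | e3 <;>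
    simp only [smul_of_even h2, smul_of_odd h2, e1, e2, e3, add_zero, zero_add] at hφ
  · exact hodd ⟨e1, e2, e3⟩
  · exact h0 hφ
  · exact h0 hφ
  · exact p23 (exists_half_of_odd e2 e3 e1 (by rw [← hrel]; abel))
  · exact h0 hφ
  · exact p13 (exists_half_of_odd e1 e3 e2 (by rw [← hrel]; abel))
  · exact p12 (exists_half_of_odd e1 e2 e3 hrel)
  · rw [← two_zsmul, h2, zero_add] at hφ
    exact h0 hφ

/-! ### Three solutions -/

/-- `(x, y, z)` is a solution in positive integers of `a ^ x + b ^ y = c ^ z`. -/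
structure IsSol (a b c x y z : ℕ) : Prop where
  hx : 0 < x
  hy : 0 < y
  hz : 0 < z
  eq : a ^ x + b ^ y = c ^ z

lemma pair_unordered {a b c x0 y0 e1 e2 f1 f2 z1 z2 : ℕ} (ha : Even a) (ha1 : 1 < a)
    (hbo : Odd b) (hb1 : 1 < b) (hco : Odd c) (hc1 : 1 < c) (hab : Nat.Coprime a b)
    (hac : Nat.Coprime a c) (hbc : Nat.Coprime b c)
    (s1 : IsSol a b c (x0 + 2 * e1) (y0 + 2 * f1) z1)
    (s2 : IsSol a b c (x0 + 2 * e2) (y0 + 2 * f2) z2)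
    (hne : ¬ (e1 = e2 ∧ f1 = f2)) (σ : ℤ) (hσ : σ = 1 ∨ σ = -1)
    (huni : (c : ℤ) ∣ (b : ℤ) ^ f1 * a ^ e2 - σ * (b ^ f2 * a ^ e1)) :
    a = 10 ∧ b = 3 ∧ c = 13 ∧
      (x0 + 2 * e1 = 1 ∧ y0 + 2 * f1 = 1 ∧ z1 = 1 ∧ x0 + 2 * e2 = 1 ∧ y0 + 2 * f2 = 7 ∧ z2 = 3 ∨
        x0 + 2 * e2 = 1 ∧ y0 + 2 * f2 = 1 ∧ z2 = 1 ∧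
          x0 + 2 * e1 = 1 ∧ y0 + 2 * f1 = 7 ∧ z1 = 3) := by
  rcases le_total f1 f2 with hf | hf
  · obtain ⟨r1, r2, r3, r4⟩ := pair_ordered ha ha1 hbo hb1 hco hc1 hab hac hbc s1.hx s2.hx s1.hy
      s2.hy s1.hz s2.hz s1.eq s2.eq hf hne σ hσ huni
    exact ⟨r1, r2, r3, Or.inl r4⟩
  · obtain ⟨r1, r2, r3, r4⟩ := pair_ordered ha ha1 hbo hb1 hco hc1 hab hac hbc s2.hx s1.hx s2.hy
      s1.hy s2.hz s1.hz s2.eq s1.eq hf (fun h => hne ⟨h.1.symm, h.2.symm⟩) σ hσ (by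
        have h := huni.mul_left (-σ)
        have e : -σ * ((b : ℤ) ^ f1 * a ^ e2 - σ * (b ^ f2 * a ^ e1)) =
            (b : ℤ) ^ f2 * a ^ e1 - σ * (b ^ f1 * a ^ e2) := by
          rcases hσ with rfl | rfl <;> ring
        rwa [e] at h)
    exact ⟨r1, r2, r3, Or.inr r4⟩

/-- The exponent vector `(x, y)` goes to the class of `a ^ x * b ^ (-y)` modulo `c`, written
additively. -/
def ratioHom {c : ℕ} (α β : (ZMod c)ˣ) : ℤ × ℤ →+ Additive (ZMod c)ˣ :=
  (zmultiplesHom _ (Additive.ofMul α)).coprod (zmultiplesHom _ (-Additive.ofMul β))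

lemma ratioHom_apply {c : ℕ} (α β : (ZMod c)ˣ) (x y : ℤ) :
    ratioHom α β (x, y) = Additive.ofMul (α ^ x * β ^ (-y)) := by
  simp [ratioHom]

/-- Modulo `c`, a solution satisfies `a ^ x ≡ -b ^ y`. -/
lemma ratioHom_sol {a b c x y z : ℕ} (hac : Nat.Coprime a c) (hbc : Nat.Coprime b c)
    (s : IsSol a b c x y z) :
    ratioHom (ZMod.unitOfCoprime a hac) (ZMod.unitOfCoprime b hbc) (x, y) =
      Additive.ofMul (-1) := by
  rw [ratioHom_apply]
  congr 1
  rw [zpow_neg, mul_inv_eq_iff_eq_mul, neg_one_mul, zpow_natCast, zpow_natCast]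
  ext
  have h := congrArg (Nat.cast : ℕ → ZMod c) s.eq
  push_cast at h
  rw [ZMod.natCast_self, zero_pow s.hz.ne'] at h
  simpa using eq_neg_of_add_eq_zero_left h

lemma dvd_of_uniform {a b c : ℕ} (hac : Nat.Coprime a c) (hbc : Nat.Coprime b c)
    {x1 y1 x2 y2 : ℕ}
    (h : Uniform (ratioHom (ZMod.unitOfCoprime a hac) (ZMod.unitOfCoprime b hbc))
      (Additive.ofMul (-1)) (x1, y1) (x2, y2)) :
    ∃ (x0 y0 e1 f1 e2 f2 : ℕ) (σ : ℤ), x1 = x0 + 2 * e1 ∧ y1 = y0 + 2 * f1 ∧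
      x2 = x0 + 2 * e2 ∧ y2 = y0 + 2 * f2 ∧ (σ = 1 ∨ σ = -1) ∧
      (c : ℤ) ∣ (b : ℤ) ^ f1 * a ^ e2 - σ * (b ^ f2 * a ^ e1) := by
  obtain ⟨⟨d1, d2⟩, hd, hφ⟩ := h
  simp only [Prod.smul_mk, Prod.mk_add_mk, Prod.mk.injEq, smul_eq_mul] at hd
  obtain ⟨e1, f1, e2, f2, he1, hf1, he2, hf2⟩ : ∃ e1 f1 e2 f2 : ℕ, x1 = x1 % 2 + 2 * e1 ∧
      y1 = y1 % 2 + 2 * f1 ∧ x2 = x1 % 2 + 2 * e2 ∧ y2 = y1 % 2 + 2 * f2 :=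
    ⟨x1 / 2, y1 / 2, x2 / 2, y2 / 2, by omega, by omega, by omega, by omega⟩
  obtain ⟨σ, hσ, hu⟩ : ∃ σ : ℤˣ, ((σ : ℤ) = 1 ∨ (σ : ℤ) = -1) ∧
      ratioHom (ZMod.unitOfCoprime a hac) (ZMod.unitOfCoprime b hbc) (d1, d2) =
        Additive.ofMul (Units.map (Int.castRingHom (ZMod c)) σ) := by
    rcases hφ with h | h
    · exact ⟨1, by simp, by rw [h]; simp⟩
    · refine ⟨-1, by simp, by rw [h]; congr 1; ext; simp⟩
  refine ⟨_, _, e1, f1, e2, f2, σ, he1, hf1, he2, hf2, hσ, ?_⟩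
  rw [ratioHom_apply, show d1 = (e2 : ℤ) - e1 by omega, show -d2 = (f1 : ℤ) - f2 by omega,
    zpow_sub, zpow_sub] at hu
  replace hu := Additive.ofMul.injective hu
  have h3 : (ZMod.unitOfCoprime b hbc) ^ f1 * (ZMod.unitOfCoprime a hac) ^ e2 =
      Units.map (Int.castRingHom (ZMod c)) σ *
        ((ZMod.unitOfCoprime b hbc) ^ f2 * (ZMod.unitOfCoprime a hac) ^ e1) := by
    rw [← hu]
    simp only [zpow_natCast]
    rw [show ∀ p q r s : (ZMod c)ˣ, p * q⁻¹ * (r * s⁻¹) * (s * q) = r * p by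
      intro p q r s
      calc p * q⁻¹ * (r * s⁻¹) * (s * q) = p * (q⁻¹ * q) * (r * (s⁻¹ * s)) := by
            simp only [mul_assoc, mul_comm, mul_left_comm]
        _ = r * p := by simp [mul_comm]]
  have h4 := congrArg (Units.val) h3
  simp at h4
  rw [← ZMod.intCast_zmod_eq_zero_iff_dvd]
  push_cast
  rw [h4, sub_self]

/-- With `a` even, three distinct solutions exist at most for `10 ^ x + 3 ^ y = 13 ^ z`. -/
lemma exceptional_of_three {a b c : ℕ} (ha : Even a) (ha1 : 1 < a)
    (hbo : Odd b) (hb1 : 1 < b) (hco : Odd c) (hc1 : 1 < c) (hab : Nat.Coprime a b)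
    (hac : Nat.Coprime a c) (hbc : Nat.Coprime b c) {x1 y1 z1 x2 y2 z2 x3 y3 z3 : ℕ}
    (s1 : IsSol a b c x1 y1 z1) (s2 : IsSol a b c x2 y2 z2) (s3 : IsSol a b c x3 y3 z3)
    (h12 : (x1, y1, z1) ≠ (x2, y2, z2)) (h13 : (x1, y1, z1) ≠ (x3, y3, z3))
    (h23 : (x2, y2, z2) ≠ (x3, y3, z3)) : a = 10 ∧ b = 3 ∧ c = 13 := by
  have key : ∀ x1 y1 z1 x2 y2 z2, IsSol a b c x1 y1 z1 → IsSol a b c x2 y2 z2 →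
      (x1, y1, z1) ≠ (x2, y2, z2) →
      Uniform (ratioHom (ZMod.unitOfCoprime a hac) (ZMod.unitOfCoprime b hbc))
      (Additive.ofMul (-1)) (x1, y1) (x2, y2) → a = 10 ∧ b = 3 ∧ c = 13 := by
    intro x1 y1 z1 x2 y2 z2 s1 s2 hne hU
    obtain ⟨x0, y0, e1, f1, e2, f2, σ, rfl, rfl, rfl, rfl, hσ, hd⟩ := dvd_of_uniform hac hbc hU
    obtain ⟨r1, r2, r3, -⟩ := pair_unordered ha ha1 hbo hb1 hco hc1 hab hac hbc s1 s2 (by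
      rintro ⟨rfl, rfl⟩
      exact hne (by rw [Nat.pow_right_injective hc1 (s1.eq.symm.trans s2.eq)])) σ hσ hd
    exact ⟨r1, r2, r3⟩
  have hε : (Additive.ofMul (-1 : (ZMod c)ˣ)) ≠ 0 := by
    intro h
    have h1 : (-1 : (ZMod c)ˣ) = 1 := Additive.ofMul.injective h
    have h2 : (-1 : ZMod c) = 1 := by simpa using congrArg Units.val h1
    have : Fact (2 < c) := ⟨by obtain ⟨k, rfl⟩ := hco; omega⟩
    exact ZMod.neg_one_ne_one h2
  have hε2 : (2 : ℤ) • (Additive.ofMul (-1 : (ZMod c)ˣ)) = 0 := by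
    rw [← ofMul_zpow]; simp
  rcases uniform_exists hε2 hε (ratioHom_sol hac hbc s1) (ratioHom_sol hac hbc s2)
    (ratioHom_sol hac hbc s3) with h | h | h
  · exact key _ _ _ _ _ _ s1 s2 h12 h
  · exact key _ _ _ _ _ _ s1 s3 h13 h
  · exact key _ _ _ _ _ _ s2 s3 h23 h

/-- The class modulo `13` of the left-hand side makes `x` odd and determines `y` modulo `3`; an even
`y` would make it divisible by `7`. -/
lemma odd_of_sol {x y z : ℕ} (s : IsSol 10 3 13 x y z) : Odd x ∧ Odd y := by
  have hmod : ∀ p, (10 ^ 6 % p = 1 % p) → (3 ^ 6 % p = 1 % p) →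
      (10 ^ (x % 6) + 3 ^ (y % 6)) % p = 13 ^ z % p := by
    intro p h10 h3
    have hx : 10 ^ x ≡ 10 ^ (x % 6) [MOD p] := by
      conv_lhs => rw [← Nat.div_add_mod x 6, pow_add, pow_mul]
      simpa using (Nat.ModEq.pow (x / 6) (show 10 ^ 6 ≡ 1 [MOD p] from h10)).mul_right _
    have hy : 3 ^ y ≡ 3 ^ (y % 6) [MOD p] := by
      conv_lhs => rw [← Nat.div_add_mod y 6, pow_add, pow_mul]
      simpa using (Nat.ModEq.pow (y / 6) (show 3 ^ 6 ≡ 1 [MOD p] from h3)).mul_right _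
    rw [← s.eq]
    exact (hx.add hy).symm
  have m13 := hmod 13 (by norm_num) (by norm_num)
  have m7 := hmod 7 (by norm_num) (by norm_num)
  rw [Nat.mod_eq_zero_of_dvd (dvd_pow_self 13 s.hz.ne')] at m13
  have n7 : (10 ^ (x % 6) + 3 ^ (y % 6)) % 7 ≠ 0 := by
    rw [m7]
    intro h
    exact absurd (Nat.Prime.dvd_of_dvd_pow (by norm_num) (Nat.dvd_of_mod_eq_zero h))
      (by norm_num : ¬ 7 ∣ 13)
  have key : ∀ i < 6, ∀ j < 6, (10 ^ i + 3 ^ j) % 13 = 0 → (10 ^ i + 3 ^ j) % 7 ≠ 0 →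
      i % 2 = 1 ∧ j % 2 = 1 := by decide
  have := key _ (Nat.mod_lt x (by norm_num)) _ (Nat.mod_lt y (by norm_num)) m13 n7
  rw [Nat.odd_iff, Nat.odd_iff]
  omega

/-- A solution other than `(1, 1, 1)` can be paired with `(1, 1, 1)`: as `13` is prime, a class whose
square is `1` is `1` or `-1`. -/
lemma sol_eq {x y z : ℕ} (s : IsSol 10 3 13 x y z) :
    (x, y, z) = (1, 1, 1) ∨ (x, y, z) = (1, 7, 3) := by
  obtain ⟨⟨e, rfl⟩, ⟨f, rfl⟩⟩ := odd_of_sol s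
  by_cases h0 : 0 = e ∧ 0 = f
  · obtain ⟨rfl, rfl⟩ := h0
    left
    have h := s.eq
    have : (13 : ℕ) ^ 1 = 13 ^ z := by rw [← h]; norm_num
    simp [← Nat.pow_right_injective (by norm_num : 2 ≤ 13) this]
  have s1 : IsSol 10 3 13 (1 + 2 * 0) (1 + 2 * 0) 1 := ⟨by simp, by simp, by simp, by simp⟩
  have hdvd : (13 : ℤ) ∣ (10 ^ e - 3 ^ f) * (10 ^ e + 3 ^ f) := by
    have h1 : (13 : ℤ) ∣ 10 ^ (2 * e + 1) + 3 ^ (2 * f + 1) := by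
      have : (10 : ℤ) ^ (2 * e + 1) + 3 ^ (2 * f + 1) = 13 ^ z := by exact_mod_cast s.eq
      rw [this]; exact dvd_pow_self _ s.hz.ne'
    obtain ⟨k, hk⟩ := h1
    have h10 : IsCoprime (13 : ℤ) 10 := ⟨-3, 4, by norm_num⟩
    refine h10.dvd_of_dvd_mul_left ⟨k - 3 ^ (2 * f), ?_⟩
    linear_combination hk
  obtain ⟨σ, hσ, hd⟩ : ∃ σ : ℤ, (σ = 1 ∨ σ = -1) ∧
      ((13 : ℕ) : ℤ) ∣ ((3 : ℕ) : ℤ) ^ 0 * (10 : ℕ) ^ e - σ * ((3 : ℕ) ^ f * (10 : ℕ) ^ 0) := by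
    have h13 : Prime (13 : ℤ) := by norm_num
    rcases h13.dvd_or_dvd hdvd with h | h
    · exact ⟨1, Or.inl rfl, by simpa using h⟩
    · exact ⟨-1, Or.inr rfl, by simpa using h⟩
  rw [add_comm (2 * e), add_comm (2 * f)] at s ⊢
  have := (pair_unordered (by decide) (by norm_num) (by decide) (by norm_num) (by decide)
    (by norm_num) (by norm_num) (by norm_num) (by norm_num) s1 s h0 σ hσ hd).2.2.2
  right
  simp only [Prod.mk.injEq]
  omega

lemma not_three_of_even {a b c : ℕ} (ha : Even a) (ha1 : 1 < a)
    (hbo : Odd b) (hb1 : 1 < b) (hco : Odd c) (hc1 : 1 < c) (hab : Nat.Coprime a b)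
    (hac : Nat.Coprime a c) (hbc : Nat.Coprime b c) {x1 y1 z1 x2 y2 z2 x3 y3 z3 : ℕ}
    (s1 : IsSol a b c x1 y1 z1) (s2 : IsSol a b c x2 y2 z2) (s3 : IsSol a b c x3 y3 z3)
    (h12 : (x1, y1, z1) ≠ (x2, y2, z2)) (h13 : (x1, y1, z1) ≠ (x3, y3, z3))
    (h23 : (x2, y2, z2) ≠ (x3, y3, z3)) : False := by
  obtain ⟨rfl, rfl, rfl⟩ :=
    exceptional_of_three ha ha1 hbo hb1 hco hc1 hab hac hbc s1 s2 s3 h12 h13 h23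
  rcases sol_eq s1 with r1 | r1 <;> rcases sol_eq s2 with r2 | r2 <;>
    rcases sol_eq s3 with r3 | r3 <;> simp_all

theorem stmt_4 (a b c : ℕ) (ha : 0 < a) (hb : 0 < b) (hc : 0 < c)
    (hab : Nat.Coprime a b) (hac : Nat.Coprime a c) (hbc : Nat.Coprime b c)
    (hmin : 1 < min a (min b c)) (hodd : Odd c) :
    {p : ℕ × ℕ × ℕ | 0 < p.1 ∧ 0 < p.2.1 ∧ 0 < p.2.2 ∧
      a ^ p.1 + b ^ p.2.1 = c ^ p.2.2}.encard ≤ 2 := by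
  obtain ⟨ha1, hb1, hc1⟩ : 1 < a ∧ 1 < b ∧ 1 < c := by simpa using hmin
  by_contra! hlt
  obtain ⟨t, ht, ht3⟩ := Set.exists_subset_encard_eq (k := 3) (by
    rw [show (3 : ℕ∞) = 2 + 1 by norm_num]
    exact Order.add_one_le_of_lt hlt)
  obtain ⟨⟨x1, y1, z1⟩, ⟨x2, y2, z2⟩, ⟨x3, y3, z3⟩, h12, h13, h23, rfl⟩ :=
    Set.encard_eq_three.1 ht3
  obtain ⟨p1, q1, r1, s1⟩ := ht (Set.mem_insert _ _)
  obtain ⟨p2, q2, r2, s2⟩ := ht (Set.mem_insert_of_mem _ (Set.mem_insert _ _))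
  obtain ⟨p3, q3, r3, s3⟩ :=
    ht (Set.mem_insert_of_mem _ (Set.mem_insert_of_mem _ (Set.mem_singleton _)))
  simp only at p1 q1 r1 s1 p2 q2 r2 s2 p3 q3 r3 s3
  have hpar : ¬ (Even a ↔ Even b) := by
    have h : Odd (a ^ x1 + b ^ y1) := s1 ▸ hodd.pow
    rw [Nat.odd_add, Nat.odd_pow_iff p1.ne', Nat.even_pow' q1.ne', ← Nat.not_even_iff_odd] at h
    tauto
  rcases Nat.even_or_odd a with hae | hao
  · exact not_three_of_even hae ha1 (Nat.not_even_iff_odd.1 (by tauto)) hb1 hodd hc1 hab hac hbc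
      ⟨p1, q1, r1, s1⟩ ⟨p2, q2, r2, s2⟩ ⟨p3, q3, r3, s3⟩ h12 h13 h23
  · rw [← Nat.not_even_iff_odd] at hao
    refine not_three_of_even (a := b) (b := a) (by tauto) hb1 (Nat.not_even_iff_odd.1 hao) ha1
      hodd hc1 hab.symm hbc hac
      ⟨q1, p1, r1, (add_comm _ _).trans s1⟩ ⟨q2, p2, r2, (add_comm _ _).trans s2⟩
      ⟨q3, p3, r3, (add_comm _ _).trans s3⟩ ?_ ?_ ?_
    all_goals simp only [ne_eq, Prod.mk.injEq] at h12 h13 h23 ⊢; tauto
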